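/- Let K be a compact Hausdorff space, Y a real Banach space, and T : C(K) → Y a bounded linear operator of rank at most n. Let 1 < p < ∞, p ≠ 2, with conjugate exponent p'. There is a constant c_p (depending only on p) such that: if 2 < p < ∞ then π_p(T) ≤ c_p · (1 + ln n)^{1/p'} · π_p^n(T), and if 1 < p < 2 then π_p(T) ≤ c_p · (1 + ln n)^{1/p'} · π_p^{m}(T) with m = ⌊n^{p'/2}⌋. -/

import Mathlib

open scoped ENNReal NNReal BigOperators

noncomputable section

/-- The `ℓ_p`-sum `(∑ i, f i ^ p) ^ (1/p)` of a finite family in `ℝ≥0∞`,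
with the usual sup-modification for `p = ∞`. -/
def eSum (p : ℝ≥0∞) {ι : Type*} [Fintype ι] (f : ι → ℝ≥0∞) : ℝ≥0∞ :=
  if p = ∞ then ⨆ i, f i else (∑ i, f i ^ p.toReal) ^ (1 / p.toReal)

/-- The weak `ℓ_q`-norm of a finite family of vectors:
`sup { (∑ k |⟨x_k, x*⟩|^q)^(1/q) : x* in the unit ball of the dual }`. -/
def weakLq (q : ℝ≥0∞) {X : Type*} [NormedAddCommGroup X] [NormedSpace ℝ X]
    {n : ℕ} (x : Fin n → X) : ℝ≥0∞ :=
  ⨆ f : {f : X →L[ℝ] ℝ // ‖f‖ ≤ 1}, eSum q fun k => ENNReal.ofReal |f.1 (x k)|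

/-- The `(p,q)`-summing norm of `T` with respect to `n` vectors. -/
def piN (p q : ℝ≥0∞) {X Y : Type*} [NormedAddCommGroup X] [NormedSpace ℝ X]
    [NormedAddCommGroup Y] [NormedSpace ℝ Y] (n : ℕ) (T : X →L[ℝ] Y) : ℝ≥0∞ :=
  ⨆ x : {x : Fin n → X // weakLq q x ≤ 1}, eSum p fun k => ENNReal.ofReal ‖T (x.1 k)‖

/-- The `(p,q)`-summing norm of `T`. -/
def piPQ (p q : ℝ≥0∞) {X Y : Type*} [NormedAddCommGroup X] [NormedSpace ℝ X]
    [NormedAddCommGroup Y] [NormedSpace ℝ Y] (T : X →L[ℝ] Y) : ℝ≥0∞ :=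
  ⨆ n : ℕ, piN p q n T

/-- `T` has rank at most `n`: its range is a finite-dimensional subspace of
dimension at most `n`. -/
def RankLE {X Y : Type*} [NormedAddCommGroup X] [NormedSpace ℝ X]
    [NormedAddCommGroup Y] [NormedSpace ℝ Y] (T : X →L[ℝ] Y) (n : ℕ) : Prop :=
  FiniteDimensional ℝ (LinearMap.range (T : X →ₗ[ℝ] Y)) ∧
    Module.finrank ℝ (LinearMap.range (T : X →ₗ[ℝ] Y)) ≤ n

/-- The average of `‖∑ k, ε k • x k‖²` over all `2^n` sign choices `ε ∈ {-1,1}^n`. -/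
def radAvg {X : Type*} [NormedAddCommGroup X] [NormedSpace ℝ X] {n : ℕ}
    (x : Fin n → X) : ℝ :=
  (∑ ε : Fin n → Bool, ‖∑ k, (if ε k then (1 : ℝ) else -1) • x k‖ ^ 2) / 2 ^ n

/-- The Rademacher cotype `q` constant of `T` with respect to `n` vectors. -/
def cotypeN (q : ℝ) {X Y : Type*} [NormedAddCommGroup X] [NormedSpace ℝ X]
    [NormedAddCommGroup Y] [NormedSpace ℝ Y] (n : ℕ) (T : X →L[ℝ] Y) : ℝ≥0∞ :=
  ⨆ x : {x : Fin n → X // Real.sqrt (radAvg x) ≤ 1},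
    (∑ k, ENNReal.ofReal ‖T (x.1 k)‖ ^ q) ^ (1 / q)

/-- The Rademacher cotype `q` constant of `T`. -/
def cotype (q : ℝ) {X Y : Type*} [NormedAddCommGroup X] [NormedSpace ℝ X]
    [NormedAddCommGroup Y] [NormedSpace ℝ Y] (T : X →L[ℝ] Y) : ℝ≥0∞ :=
  ⨆ n : ℕ, cotypeN q n T

/-!
By the barrier method of Batson, Spielman and Srivastava, an orthonormal basis pushed through an
operator of rank at most `n` can be replaced by `n` vectors whose frame operator is at most the
identity, with a loss of a factor `4` in `∑ ‖w (b k)‖ ^ 2`. Hence `π_2(T) ≤ 2 π_2^n(T)`, and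
Pietsch's theorem for `π_2` together with a Hilbert-Schmidt bound gives `π_1(T) ≤ √n π_2(T)`.

Interpolating these with `π_p^m(T)`, by splitting a family at a critical height of `‖T (x k)‖`,
bounds `π_{p,1}(T)` by `π_p^m(T)` without any dependence on `n`, while `π_1(T)` is at most
`2 n π_p^m(T)`. Let `L` be the sum of a Pisier functional for `π_{p,1}(T)` and a Pietsch functional
for `π_1(T)`, and let `L (|x| ^ p) ≤ 1`. Cut `x ≥ 0` at the heights `1, 2, 4, …, 2 ^ J`: the Pisier
functional controls each bounded layer, the Pietsch functional the part above `2 ^ J`, which is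
negligible once `2 ^ (J (p - 1)) ≥ n`. Summing the `J ~ 1 + log n` layers with Hölder's inequality
yields the factor `(1 + log n) ^ (p - 1)` for the `p`-th power.
-/

section BarrierMethod

open Matrix

variable {d : Type*} [Fintype d]

lemma mulVec_dotProduct_mulVec {A : Matrix d d ℝ} (hA : A.IsHermitian) (u : d → ℝ) :
    A *ᵥ u ⬝ᵥ A *ᵥ u = u ⬝ᵥ (A * A) *ᵥ u := by
  have hAt : Aᵀ = A := by simpa only [conjTranspose_eq_transpose_of_trivial] using hA.eq
  rw [← mulVec_mulVec, dotProduct_mulVec, ← mulVec_transpose, hAt, dotProduct_comm]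

variable [DecidableEq d]

lemma inv_sub_vecMulVec {R : Type*} [Field R] {A : Matrix d d R} (hA : IsUnit A.det) (u v : d → R)
    (huv : 1 - v ⬝ᵥ A⁻¹ *ᵥ u ≠ 0) :
    (A - vecMulVec u v)⁻¹ =
      A⁻¹ + (1 - v ⬝ᵥ A⁻¹ *ᵥ u)⁻¹ • vecMulVec (A⁻¹ *ᵥ u) (v ᵥ* A⁻¹) := by
  refine inv_eq_right_inv ?_
  set c := v ⬝ᵥ A⁻¹ *ᵥ u with hc
  have hinv : A * A⁻¹ = 1 := mul_nonsing_inv A hA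
  have hcoeff : (1 - c)⁻¹ - 1 - (1 - c)⁻¹ * c = 0 := by field_simp; ring
  rw [sub_mul, mul_add, mul_add, hinv, Matrix.mul_smul, Matrix.mul_smul, mul_vecMulVec,
    mulVec_mulVec, hinv, one_mulVec, vecMulVec_mul, vecMulVec_mul_vecMulVec, ← hc, vecMulVec_smul]
  calc _ = 1 + ((1 - c)⁻¹ - 1 - (1 - c)⁻¹ * c) • vecMulVec u (v ᵥ* A⁻¹) := by module
    _ = 1 := by rw [hcoeff, zero_smul, add_zero]

lemma sum_dotProduct_mulVec_eq_trace {ι R : Type*} [Fintype ι] [CommRing R] {u : ι → d → R}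
    (hu : ∑ k, vecMulVec (u k) (u k) = 1) (A : Matrix d d R) :
    ∑ k, u k ⬝ᵥ A *ᵥ u k = A.trace := by
  calc ∑ k, u k ⬝ᵥ A *ᵥ u k = (A * ∑ k, vecMulVec (u k) (u k)).trace := by
        simp_rw [Finset.mul_sum, trace_sum, mul_vecMulVec, trace_vecMulVec, dotProduct_comm]
    _ = A.trace := by rw [hu, mul_one]

lemma trace_inv_add_one_add_trace_sq_le {A : Matrix d d ℝ} (hA : A.PosDef) :
    ((A + 1)⁻¹).trace + ((A + 1)⁻¹ * (A + 1)⁻¹).trace ≤ (A⁻¹).trace := by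
  set R := (A + 1)⁻¹
  have hR_herm : Rᴴ = R := (hA.add PosDef.one).inv.isHermitian.eq
  have hAinv : A⁻¹ = R + A⁻¹ * R := by
    calc A⁻¹ = A⁻¹ * ((A + 1) * R) := by
          rw [mul_nonsing_inv _ ((isUnit_iff_isUnit_det _).1 (hA.add PosDef.one).isUnit), mul_one]
      _ = R + A⁻¹ * R := by
          rw [add_mul, mul_add, one_mul, ← mul_assoc,
            nonsing_inv_mul _ ((isUnit_iff_isUnit_det _).1 hA.isUnit), one_mul]
  have hexpand : A⁻¹ = R + R * R + A⁻¹ * R * R := by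
    conv_lhs => rw [hAinv, hAinv, add_mul, ← add_assoc]
  have hrest : 0 ≤ (A⁻¹ * R * R).trace := by
    have := (hA.inv.posSemidef.conjTranspose_mul_mul_same R).trace_nonneg
    rwa [hR_herm, trace_mul_comm, ← mul_assoc, trace_mul_comm, ← mul_assoc] at this
  have := congrArg trace hexpand
  rw [trace_add, trace_add] at this
  linarith

/-- The price of the vector `u` at the barrier matrix `A` in the barrier method of Batson, Spielman
and Srivastava: subtracting `(barrierCost A u)⁻¹ • u uᵀ` from `A` keeps it positive definite and
increases the potential `tr A⁻¹` by `tr A⁻²`. -/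
def barrierCost (A : Matrix d d ℝ) (u : d → ℝ) : ℝ :=
  A⁻¹ *ᵥ u ⬝ᵥ A⁻¹ *ᵥ u / (A⁻¹ * A⁻¹).trace + u ⬝ᵥ A⁻¹ *ᵥ u

lemma trace_inv_mul_inv_nonneg {A : Matrix d d ℝ} (hA : A.PosDef) : 0 ≤ (A⁻¹ * A⁻¹).trace := by
  simpa only [hA.inv.isHermitian.eq] using (posSemidef_conjTranspose_mul_self A⁻¹).trace_nonneg

lemma barrierCost_pos {A : Matrix d d ℝ} (hA : A.PosDef) {u : d → ℝ} (hu : u ≠ 0) :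
    0 < barrierCost A u := by
  have hquad : 0 < u ⬝ᵥ A⁻¹ *ᵥ u := by
    simpa only [star_trivial] using hA.inv.dotProduct_mulVec_pos hu
  have hnorm : 0 ≤ A⁻¹ *ᵥ u ⬝ᵥ A⁻¹ *ᵥ u := dotProduct_self_star_nonneg _
  have := trace_inv_mul_inv_nonneg hA
  exact add_pos_of_nonneg_of_pos (by positivity) hquad

lemma barrierCost_nonneg {A : Matrix d d ℝ} (hA : A.PosDef) (u : d → ℝ) : 0 ≤ barrierCost A u := by
  rcases eq_or_ne u 0 with rfl | hu
  · simp [barrierCost]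
  · exact (barrierCost_pos hA hu).le

lemma sum_barrierCost_le {ι : Type*} [Fintype ι] {u : ι → d → ℝ}
    (hu : ∑ k, vecMulVec (u k) (u k) = 1) {A : Matrix d d ℝ} (hA : A.IsHermitian) :
    ∑ k, barrierCost A (u k) ≤ 1 + (A⁻¹).trace := by
  simp only [barrierCost, Finset.sum_add_distrib, ← Finset.sum_div,
    mulVec_dotProduct_mulVec hA.inv, sum_dotProduct_mulVec_eq_trace hu]
  gcongr
  exact div_self_le_one _

lemma inv_sub_inv_barrierCost_smul {A : Matrix d d ℝ} (hA : A.PosDef) {u : d → ℝ} (hu : u ≠ 0) :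
    (A - (barrierCost A u)⁻¹ • vecMulVec u u)⁻¹ = A⁻¹ +
      ((A⁻¹ * A⁻¹).trace / (A⁻¹ *ᵥ u ⬝ᵥ A⁻¹ *ᵥ u)) • vecMulVec (A⁻¹ *ᵥ u) (A⁻¹ *ᵥ u) := by
  have hAu : A⁻¹ *ᵥ u ≠ 0 := by
    intro h
    have := hA.inv.dotProduct_mulVec_pos hu
    simp [h] at this
  have hnorm : 0 < A⁻¹ *ᵥ u ⬝ᵥ A⁻¹ *ᵥ u := dotProduct_self_star_pos_iff.2 hAu
  have htrace : 0 < (A⁻¹ * A⁻¹).trace := by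
    refine (trace_inv_mul_inv_nonneg hA).lt_of_ne' fun h => hAu ?_
    have : A⁻¹ = 0 := by
      rwa [← trace_conjTranspose_mul_self_eq_zero_iff, hA.inv.isHermitian.eq]
    rw [this, zero_mulVec]
  have hcost := barrierCost_pos hA hu
  have hgap : 1 - u ⬝ᵥ A⁻¹ *ᵥ ((barrierCost A u)⁻¹ • u) =
      (barrierCost A u)⁻¹ * (A⁻¹ *ᵥ u ⬝ᵥ A⁻¹ *ᵥ u / (A⁻¹ * A⁻¹).trace) := by
    rw [mulVec_smul, dotProduct_smul, smul_eq_mul, ← inv_mul_cancel₀ hcost.ne', ← mul_sub]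
    congr 1
    exact add_sub_cancel_right _ _
  have hrow : u ᵥ* A⁻¹ = A⁻¹ *ᵥ u := by
    conv_lhs => rw [← hA.inv.isHermitian.eq, conjTranspose_eq_transpose_of_trivial,
      vecMul_transpose]
  rw [← smul_vecMulVec, inv_sub_vecMulVec ((isUnit_iff_isUnit_det _).1 hA.isUnit), hgap, hrow,
    mulVec_smul, smul_vecMulVec, smul_smul]
  · congr 2
    field_simp
  · rw [hgap]
    positivity

lemma posDef_sub_inv_barrierCost_smul {A : Matrix d d ℝ} (hA : A.PosDef) {u : d → ℝ} (hu : u ≠ 0) :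
    (A - (barrierCost A u)⁻¹ • vecMulVec u u).PosDef := by
  rw [← posDef_inv_iff, inv_sub_inv_barrierCost_smul hA hu]
  refine hA.inv.add_posSemidef (PosSemidef.smul ?_ ?_)
  · simpa only [star_trivial] using posSemidef_vecMulVec_self_star (A⁻¹ *ᵥ u)
  · exact div_nonneg (trace_inv_mul_inv_nonneg hA) (dotProduct_self_star_nonneg _)

lemma trace_inv_sub_inv_barrierCost_smul_le {A : Matrix d d ℝ} (hA : A.PosDef) {u : d → ℝ}
    (hu : u ≠ 0) :
    ((A - (barrierCost A u)⁻¹ • vecMulVec u u)⁻¹).trace ≤ (A⁻¹).trace + (A⁻¹ * A⁻¹).trace := by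
  rw [inv_sub_inv_barrierCost_smul hA hu, trace_add, trace_smul, trace_vecMulVec, smul_eq_mul]
  gcongr
  rw [div_mul_eq_mul_div, mul_div_assoc]
  exact mul_le_of_le_one_right (trace_inv_mul_inv_nonneg hA) (div_self_le_one _)

variable {ι : Type*} [Fintype ι] {u : ι → d → ℝ} {b : ι → ℝ}

lemma exists_barrierCost_le (hu : ∑ k, vecMulVec (u k) (u k) = 1) (hb : ∀ k, u k = 0 → b k = 0)
    (hB : 0 < ∑ k, b k) {A : Matrix d d ℝ} (hA : A.PosDef) (htr : (A⁻¹).trace ≤ 1) :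
    ∃ k, u k ≠ 0 ∧ (∑ k, b k) / 2 * barrierCost A (u k) ≤ b k := by
  by_contra! hcon
  have hle : ∀ k, b k ≤ (∑ k, b k) / 2 * barrierCost A (u k) := fun k => by
    by_cases hk : u k = 0
    · rw [hb k hk]
      exact mul_nonneg (by positivity) (barrierCost_nonneg hA _)
    · exact (hcon k hk).le
  obtain ⟨k, -, hk⟩ := Finset.exists_ne_zero_of_sum_ne_zero hB.ne'
  have hlt : ∑ k, b k < (∑ k, b k) / 2 * ∑ k, barrierCost A (u k) := by
    rw [Finset.mul_sum]
    exact Finset.sum_lt_sum (fun k _ => hle k) ⟨k, Finset.mem_univ k, hcon k (mt (hb k) hk)⟩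
  nlinarith [sum_barrierCost_le hu hA.isHermitian]

lemma exists_posDef_add_one_sub_smul (hu : ∑ k, vecMulVec (u k) (u k) = 1)
    (hb : ∀ k, u k = 0 → b k = 0) (hB : 0 < ∑ k, b k) {A : Matrix d d ℝ} (hA : A.PosDef)
    (htr : (A⁻¹).trace ≤ 1) :
    ∃ k, ∃ c : ℝ, 0 ≤ c ∧ (A + 1 - c • vecMulVec (u k) (u k)).PosDef ∧
      ((A + 1 - c • vecMulVec (u k) (u k))⁻¹).trace ≤ 1 ∧ (∑ k, b k) / 2 ≤ c * b k := by
  have hA1 : (A + 1).PosDef := hA.add PosDef.one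
  have htr1 := (trace_inv_add_one_add_trace_sq_le hA).trans htr
  obtain ⟨k, hk, hbk⟩ := exists_barrierCost_le hu hb hB hA1
    (by linarith [trace_inv_mul_inv_nonneg hA1])
  have hcost := barrierCost_pos hA1 hk
  exact ⟨k, (barrierCost (A + 1) (u k))⁻¹, inv_nonneg.2 hcost.le,
    posDef_sub_inv_barrierCost_smul hA1 hk,
    (trace_inv_sub_inv_barrierCost_smul_le hA1 hk).trans htr1,
    by rwa [inv_mul_eq_div, le_div_iff₀ hcost]⟩

lemma exists_finsupp_posDef_sub [Nonempty d] (hu : ∑ k, vecMulVec (u k) (u k) = 1)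
    (hb : ∀ k, u k = 0 → b k = 0) (hB : 0 < ∑ k, b k) (j : ℕ) :
    ∃ t : ι →₀ ℝ, 0 ≤ t ∧ t.support.card ≤ j ∧ j * ((∑ k, b k) / 2) ≤ ∑ k, t k * b k ∧
      ∃ A : Matrix d d ℝ, A.PosDef ∧ (A⁻¹).trace ≤ 1 ∧
        A = ((Fintype.card d + j : ℕ) : ℝ) • 1 - ∑ k, t k • vecMulVec (u k) (u k) := by
  classical
  have hd : (0 : ℝ) < Fintype.card d := by exact_mod_cast Fintype.card_pos
  induction j with
  | zero =>
    have hinv : ((Fintype.card d : ℝ) • (1 : Matrix d d ℝ))⁻¹ = (Fintype.card d : ℝ)⁻¹ • 1 :=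
      inv_eq_left_inv (by simp [smul_smul, hd.ne'])
    refine ⟨0, le_rfl, by simp, by simp, (Fintype.card d : ℝ) • 1, PosDef.one.smul hd, ?_, by simp⟩
    simp [hinv, hd.ne']
  | succ j ih =>
    obtain ⟨t, ht, hcard, hsum, A, hA, htr, hAt⟩ := ih
    obtain ⟨k, c, hc, hA', htr', hbk⟩ := exists_posDef_add_one_sub_smul hu hb hB hA htr
    refine ⟨t + Finsupp.single k c, add_nonneg ht (Finsupp.single_nonneg.2 hc), ?_, ?_,
      A + 1 - c • vecMulVec (u k) (u k), hA', htr', ?_⟩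
    · refine (Finset.card_le_card Finsupp.support_add).trans ((Finset.card_union_le _ _).trans ?_)
      exact add_le_add hcard ((Finset.card_le_card Finsupp.support_single_subset).trans_eq
        (Finset.card_singleton k))
    · simp only [Finsupp.add_apply, add_mul, Finset.sum_add_distrib, Finsupp.single_apply,
        ite_mul, zero_mul, Finset.sum_ite_eq, Finset.mem_univ, if_true]
      push_cast
      linarith
    · simp only [hAt, Finsupp.add_apply, add_smul, Finset.sum_add_distrib, Finsupp.single_apply,
        ite_smul, zero_smul, Finset.sum_ite_eq, Finset.mem_univ, if_true]
      push_cast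
      module

lemma exists_sparse_weights (hu : ∑ k, vecMulVec (u k) (u k) = (1 : Matrix d d ℝ))
    (hb : ∀ k, u k = 0 → b k = 0) :
    ∃ t : ι →₀ ℝ, 0 ≤ t ∧ t.support.card ≤ Fintype.card d ∧ (∑ k, b k) / 4 ≤ ∑ k, t k * b k ∧
      ∀ y : d → ℝ, ∑ k, t k * (u k ⬝ᵥ y) ^ 2 ≤ y ⬝ᵥ y := by
  rcases le_or_gt (∑ k, b k) 0 with hB | hB
  · exact ⟨0, le_rfl, by simp, by simpa using by linarith,
      fun y => by simpa using dotProduct_self_star_nonneg y⟩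
  have : Nonempty d := by
    obtain ⟨k, -, hk⟩ := Finset.exists_ne_zero_of_sum_ne_zero hB.ne'
    by_contra hd
    exact hk (hb k (funext fun i => (hd ⟨i⟩).elim))
  obtain ⟨t, ht, hcard, hsum, A, hA, -, hAt⟩ :=
    exists_finsupp_posDef_sub hu hb hB (Fintype.card d)
  set n : ℝ := (Fintype.card d : ℝ) with hn
  refine ⟨(2 * n)⁻¹ • t, smul_nonneg (by positivity) ht,
    (Finset.card_le_card Finsupp.support_smul).trans hcard, ?_, fun y => ?_⟩
  · simp only [Finsupp.smul_apply, smul_eq_mul, mul_assoc, ← Finset.mul_sum]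
    rw [inv_mul_eq_div, le_div_iff₀ (by positivity)]
    linarith
  · have hquad : y ⬝ᵥ (∑ k, t k • vecMulVec (u k) (u k)) *ᵥ y = ∑ k, t k * (u k ⬝ᵥ y) ^ 2 := by
      simp only [sum_mulVec, dotProduct_comm y, sum_dotProduct, smul_mulVec, vecMulVec_mulVec,
        smul_dotProduct, op_smul_eq_smul, smul_eq_mul, sq]
    have hA_quad := hA.posSemidef.dotProduct_mulVec_nonneg y
    rw [hAt, star_trivial, sub_mulVec, dotProduct_sub, hquad, smul_mulVec, one_mulVec,
      dotProduct_smul, smul_eq_mul, Nat.cast_add, ← hn, sub_nonneg] at hA_quad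
    simp only [Finsupp.smul_apply, smul_eq_mul, mul_assoc, ← Finset.mul_sum]
    rw [inv_mul_eq_div, div_le_iff₀ (by positivity)]
    linarith

end BarrierMethod

section FiniteRank

variable {E : Type*} [NormedAddCommGroup E] [InnerProductSpace ℝ E] [FiniteDimensional ℝ E]
  {ι : Type*} [Fintype ι]

lemma exists_orthonormal_map_eq {Y : Type*} [AddCommGroup Y] [Module ℝ Y] (w : E →ₗ[ℝ] Y) :
    ∃ β : Fin (Module.finrank ℝ (LinearMap.range w)) → E, Orthonormal ℝ β ∧
      ∀ x, w x = w (∑ i, inner ℝ (β i) x • β i) := by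
  set V := (LinearMap.ker w)ᗮ with hV
  have hdim : Module.finrank ℝ V = Module.finrank ℝ (LinearMap.range w) := by
    rw [← add_right_inj (Module.finrank ℝ (LinearMap.ker w)), hV,
      (LinearMap.ker w).finrank_add_finrank_orthogonal, add_comm, w.finrank_range_add_finrank_ker]
  let β := (stdOrthonormalBasis ℝ V).reindex (finCongr hdim)
  refine ⟨fun i => β i, β.orthonormal.comp_linearIsometry V.subtypeₗᵢ, fun x => ?_⟩
  have hker : x - V.starProjection x ∈ LinearMap.ker w := by
    simpa only [hV, Submodule.orthogonal_orthogonal] using V.sub_starProjection_mem_orthogonal x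
  rw [← sub_eq_zero, ← map_sub, ← LinearMap.mem_ker]
  convert hker
  simp [Submodule.starProjection_apply, β.orthogonalProjectionOnto_apply_eq_sum]

variable {Y : Type*} [NormedAddCommGroup Y] [NormedSpace ℝ Y]

lemma sum_norm_map_sq_le (b : OrthonormalBasis ι ℝ E) (w : E →ₗ[ℝ] Y) {D : ℝ}
    (hw : ∀ x, ‖w x‖ ^ 2 ≤ D * ‖x‖ ^ 2) :
    ∑ k, ‖w (b k)‖ ^ 2 ≤ Module.finrank ℝ (LinearMap.range w) * D := by
  obtain ⟨β, hβ, hwβ⟩ := exists_orthonormal_map_eq w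
  calc ∑ k, ‖w (b k)‖ ^ 2 ≤ ∑ k, D * ∑ i, inner ℝ (β i) (b k) ^ 2 := by
        refine Finset.sum_le_sum fun k _ => ?_
        rw [hwβ (b k)]
        refine (hw _).trans_eq ?_
        rw [← real_inner_self_eq_norm_sq, hβ.inner_sum]
        simp only [conj_trivial, sq]
    _ = D * ∑ i, ‖β i‖ ^ 2 := by
        rw [← Finset.mul_sum, Finset.sum_comm]
        simp only [← b.sum_sq_norm_inner_left, Real.norm_eq_abs, sq_abs]
    _ = Module.finrank ℝ (LinearMap.range w) * D := by simp [hβ.1, mul_comm]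

lemma exists_finset_sum_norm_map_sq_le (b : OrthonormalBasis ι ℝ E) (w : E →ₗ[ℝ] Y) :
    ∃ (s : Finset ι) (v : ι → E), s.card ≤ Module.finrank ℝ (LinearMap.range w) ∧
      (∀ y, ∑ k ∈ s, inner ℝ (v k) y ^ 2 ≤ ‖y‖ ^ 2) ∧
      (∑ k, ‖w (b k)‖ ^ 2) / 4 ≤ ∑ k ∈ s, ‖w (v k)‖ ^ 2 := by
  obtain ⟨β, hβ, hwβ⟩ := exists_orthonormal_map_eq w
  have hframe :
      ∑ k, Matrix.vecMulVec (fun i => inner ℝ (β i) (b k)) (fun i => inner ℝ (β i) (b k)) = 1 := by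
    ext i j
    rw [Matrix.sum_apply, Matrix.one_apply, ← orthonormal_iff_ite.1 hβ i j,
      ← b.sum_inner_mul_inner (β i) (β j)]
    simp only [Matrix.vecMulVec_apply, real_inner_comm (b _) (β j)]
  obtain ⟨t, ht, hcard, hsum, hbessel⟩ := exists_sparse_weights hframe
    (b := fun k => ‖w (b k)‖ ^ 2) fun k hk => by
      simp [hwβ (b k), funext_iff.1 hk]
  refine ⟨t.support, fun k => √(t k) • ∑ i, inner ℝ (β i) (b k) • β i, by simpa using hcard,
    fun y => ?_, ?_⟩
  · calc ∑ k ∈ t.support, inner ℝ (√(t k) • ∑ i, inner ℝ (β i) (b k) • β i) y ^ 2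
        = ∑ k ∈ t.support, t k * (∑ i, inner ℝ (β i) (b k) * inner ℝ (β i) y) ^ 2 := by
          refine Finset.sum_congr rfl fun k _ => ?_
          rw [real_inner_smul_left, mul_pow, Real.sq_sqrt (ht k), sum_inner]
          simp only [real_inner_smul_left]
      _ ≤ ∑ k, t k * (∑ i, inner ℝ (β i) (b k) * inner ℝ (β i) y) ^ 2 :=
          Finset.sum_le_univ_sum_of_nonneg fun k => mul_nonneg (ht k) (sq_nonneg _)
      _ ≤ ∑ i, inner ℝ (β i) y ^ 2 := by
          simpa [dotProduct, sq] using hbessel fun i => inner ℝ (β i) y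
      _ ≤ ‖y‖ ^ 2 := by simpa using hβ.sum_inner_products_le y (s := Finset.univ)
  · rw [Finset.sum_subset t.support.subset_univ fun k _ hk => by
      simp [Finsupp.notMem_support_iff.1 hk]]
    refine hsum.trans_eq (Finset.sum_congr rfl fun k _ => ?_)
    rw [map_smul, ← hwβ, norm_smul, mul_pow, Real.norm_eq_abs, sq_abs, Real.sq_sqrt (ht k)]

end FiniteRank

section PowerSums

lemma rpow_sub_one_mul_self {p y : ℝ} (hp : 1 ≤ p) (hy : 0 ≤ y) : y ^ (p - 1) * y = y ^ p := by
  nth_rw 2 [← Real.rpow_one y]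
  rw [← Real.rpow_add_of_nonneg hy (sub_nonneg.2 hp) zero_le_one, sub_add_cancel]

lemma mul_rpow_sub_one_mul_le {p a c : ℝ} (hp : 1 < p) (ha : 0 ≤ a) (hc : 0 ≤ c) :
    p * (a ^ (p - 1) * c) ≤ (p - 1) * a ^ p + c ^ p := by
  have hp1 : 0 < p - 1 := sub_pos.2 hp
  have hyoung := Real.young_inequality_of_nonneg (Real.rpow_nonneg ha (p - 1)) hc
    (Real.HolderConjugate.conjExponent hp).symm
  rw [← Real.rpow_mul ha, Real.conjExponent, mul_div_cancel₀ _ hp1.ne'] at hyoung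
  calc p * (a ^ (p - 1) * c) ≤ p * (a ^ p / (p / (p - 1)) + c ^ p / p) := by gcongr
    _ = (p - 1) * a ^ p + c ^ p := by field_simp

variable {α : Type*} {s : Finset α} {a : α → ℝ} {p q : ℝ}

lemma sum_rpow_le_one_of_le (ha : ∀ k ∈ s, 0 ≤ a k) (hp : 0 < p) (hpq : p ≤ q)
    (h : ∑ k ∈ s, a k ^ p ≤ 1) : ∑ k ∈ s, a k ^ q ≤ 1 := by
  refine (Finset.sum_le_sum fun k hk => ?_).trans h
  have hak : a k ^ p ≤ 1 :=
    (Finset.single_le_sum (fun i hi => Real.rpow_nonneg (ha i hi) p) hk).trans h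
  exact Real.rpow_le_rpow_of_exponent_ge' (ha k hk)
    (not_lt.1 fun hlt => (Real.one_lt_rpow hlt hp).not_ge hak) hp.le hpq

lemma sum_rpow_le_card_rpow_mul (ha : ∀ k ∈ s, 0 ≤ a k) (hq : 0 < q) (hqp : q ≤ p) :
    ∑ k ∈ s, a k ^ q ≤ (s.card : ℝ) ^ (1 - q / p) * (∑ k ∈ s, a k ^ p) ^ (q / p) := by
  have hp : 0 < p := hq.trans_le hqp
  have hpow : ∀ k ∈ s, (a k ^ q) ^ (p / q) = a k ^ p := fun k hk => by
    rw [← Real.rpow_mul (ha k hk), mul_div_cancel₀ _ hq.ne']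
  have hnonneg : ∀ k ∈ s, 0 ≤ a k ^ q := fun k hk => Real.rpow_nonneg (ha k hk) q
  have hjensen := Real.rpow_sum_le_const_mul_sum_rpow_of_nonneg s ((one_le_div hq).2 hqp) hnonneg
  rw [Finset.sum_congr rfl hpow] at hjensen
  calc ∑ k ∈ s, a k ^ q = ((∑ k ∈ s, a k ^ q) ^ (p / q)) ^ (q / p) := by
        rw [← Real.rpow_mul (Finset.sum_nonneg hnonneg), div_mul_div_cancel₀ hq.ne',
          div_self hp.ne', Real.rpow_one]
    _ ≤ ((s.card : ℝ) ^ (p / q - 1) * ∑ k ∈ s, a k ^ p) ^ (q / p) := by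
        gcongr
        exact Real.rpow_nonneg (Finset.sum_nonneg hnonneg) _
    _ = (s.card : ℝ) ^ (1 - q / p) * (∑ k ∈ s, a k ^ p) ^ (q / p) := by
        rw [Real.mul_rpow (by positivity)
            (Finset.sum_nonneg fun k hk => Real.rpow_nonneg (ha k hk) p),
          ← Real.rpow_mul (by positivity)]
        congr 2
        field_simp

/- At most `m` of the numbers `a k` exceed `τ = P / m ^ (1 / p)`. -/
lemma sum_rpow_le_add_mul_sum_rpow (ha : ∀ k, 0 ≤ a k) (hq : 0 ≤ q) (hqp : q ≤ p) (hp : 0 < p)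
    {m : ℕ} (hm : m ≠ 0) {P : ℝ} (hP : 0 ≤ P)
    (h : ∀ u ⊆ s, u.card ≤ m → ∑ k ∈ u, a k ^ p ≤ P ^ p) :
    ∑ k ∈ s, a k ^ p ≤ P ^ p + (P / (m : ℝ) ^ (1 / p)) ^ (p - q) * ∑ k ∈ s, a k ^ q := by
  have hm' : (0 : ℝ) < m := by positivity
  set τ := P / (m : ℝ) ^ (1 / p) with hτ
  have hτ0 : 0 ≤ τ := by positivity
  have hτp : m * τ ^ p = P ^ p := by
    rw [hτ, Real.div_rpow hP (by positivity), ← Real.rpow_mul hm'.le, one_div_mul_cancel hp.ne',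
      Real.rpow_one, mul_div_cancel₀ _ hm'.ne']
  have hlarge : ∑ k ∈ s with τ < a k, a k ^ p ≤ P ^ p := by
    refine h _ (Finset.filter_subset _ _) (not_lt.1 fun hcard => ?_)
    obtain ⟨u, hu, hum⟩ := Finset.exists_subset_card_eq hcard.le
    have hlt : ∑ _k ∈ u, τ ^ p < ∑ k ∈ u, a k ^ p :=
      Finset.sum_lt_sum_of_nonempty (Finset.card_pos.1 (by omega)) fun k hk =>
        Real.rpow_lt_rpow hτ0 (Finset.mem_filter.1 (hu hk)).2 hp
    rw [Finset.sum_const, hum, nsmul_eq_mul, hτp] at hlt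
    exact hlt.not_ge (h u (hu.trans (Finset.filter_subset _ _)) hum.le)
  have hsmall : ∑ k ∈ s with ¬ τ < a k, a k ^ p ≤ τ ^ (p - q) * ∑ k ∈ s, a k ^ q := by
    rw [Finset.mul_sum]
    refine (Finset.sum_le_sum fun k hk => ?_).trans (Finset.sum_le_sum_of_subset_of_nonneg
      (Finset.filter_subset _ _) fun k _ _ => mul_nonneg (Real.rpow_nonneg hτ0 _)
        (Real.rpow_nonneg (ha k) _))
    rw [← sub_add_cancel p q, Real.rpow_add_of_nonneg (ha k) (sub_nonneg.2 hqp) hq,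
      add_sub_cancel_right]
    exact mul_le_mul_of_nonneg_right (Real.rpow_le_rpow (ha k)
      (not_lt.1 (Finset.mem_filter.1 hk).2) (sub_nonneg.2 hqp)) (Real.rpow_nonneg (ha k) _)
  rw [← Finset.sum_filter_add_sum_filter_not s (τ < a ·)]
  exact add_le_add hlarge hsmall

lemma sum_rpow_sub_mul_rpow_le {b : α → ℝ} (ha : ∀ k ∈ s, 0 ≤ a k) (hb : ∀ k ∈ s, 0 ≤ b k)
    (hp : 0 < p) (hpq : p < q) :
    ∑ k ∈ s, a k ^ (q - p) * b k ^ p ≤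
      (∑ k ∈ s, a k ^ q) ^ ((q - p) / q) * (∑ k ∈ s, b k ^ q) ^ (p / q) := by
  have hq : 0 < q := hp.trans hpq
  have hconj : (q / (q - p)).HolderConjugate (q / p) := by
    rw [Real.holderConjugate_iff]
    refine ⟨(one_lt_div (by linarith)).2 (by linarith), ?_⟩
    field_simp
    ring
  have hapow : ∀ k ∈ s, (a k ^ (q - p)) ^ (q / (q - p)) = a k ^ q := fun k hk => by
    rw [← Real.rpow_mul (ha k hk), mul_div_cancel₀ _ (sub_pos.2 hpq).ne']
  have hbpow : ∀ k ∈ s, (b k ^ p) ^ (q / p) = b k ^ q := fun k hk => by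
    rw [← Real.rpow_mul (hb k hk), mul_div_cancel₀ _ hp.ne']
  have := Real.inner_le_Lp_mul_Lq_of_nonneg s hconj
    (fun k hk => Real.rpow_nonneg (ha k hk) (q - p)) (fun k hk => Real.rpow_nonneg (hb k hk) p)
  rwa [Finset.sum_congr rfl hapow, Finset.sum_congr rfl hbpow, one_div_div, one_div_div] at this

lemma le_rpow_of_le_rpow_mul_rpow {S P : ℝ} (hS : 0 ≤ S) (hP : 0 ≤ P) (hp : 0 < p) (hq : 0 < q)
    (h : S ≤ P ^ p * S ^ ((q - p) / q)) : S ≤ P ^ q := by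
  rcases hS.eq_or_lt with rfl | hS
  · positivity
  have hpow : S ^ (p / q) ≤ P ^ p := by
    refine le_of_mul_le_mul_right ?_ (Real.rpow_pos_of_pos hS ((q - p) / q))
    rwa [← Real.rpow_add hS, ← add_div, add_sub_cancel, div_self hq.ne', Real.rpow_one]
  calc S = (S ^ (p / q)) ^ (q / p) := by
        rw [← Real.rpow_mul hS.le, div_mul_div_cancel₀ hq.ne', div_self hp.ne', Real.rpow_one]
    _ ≤ (P ^ p) ^ (q / p) := by gcongr
    _ = P ^ q := by rw [← Real.rpow_mul hP, mul_div_cancel₀ _ hp.ne']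

end PowerSums

section SummingBounds

variable {K : Type*} [TopologicalSpace K] {Y : Type*} [NormedAddCommGroup Y]
  [NormedSpace ℝ Y] {T : C(K, ℝ) →L[ℝ] Y} {p q M : ℝ} {m : ℕ}

/-- `π_{p,q}^m(T) ^ p ≤ M` for an operator `T` on `C(K)`. The weak `ℓ_q`-norm of a family of
functions is the supremum over `K` of its pointwise `ℓ_q`-norm, so no functionals appear. -/
def HasSummingBound (p q : ℝ) (m : ℕ) (M : ℝ) (T : C(K, ℝ) →L[ℝ] Y) : Prop :=
  ∀ x : Fin m → C(K, ℝ), (∀ t, ∑ k, |x k t| ^ q ≤ 1) → ∑ k, ‖T (x k)‖ ^ p ≤ M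

namespace HasSummingBound

lemma mono {M' : ℝ} (h : HasSummingBound p q m M T) (hM : M ≤ M') :
    HasSummingBound p q m M' T := fun x hx =>
  (h x hx).trans hM

lemma weak_exponent_down {r : ℝ} (h : HasSummingBound p q m M T) (hr : 0 < r)
    (hrq : r ≤ q) : HasSummingBound p r m M T := fun x hx =>
  h x fun t => sum_rpow_le_one_of_le (fun k _ => abs_nonneg (x k t)) hr hrq (hx t)

lemma sum_le_of_card_le (h : HasSummingBound p q m M T) (hp : p ≠ 0) (hq : q ≠ 0) {α : Type*}
    {s : Finset α} (hs : s.card ≤ m) {x : α → C(K, ℝ)} (hx : ∀ t, ∑ k ∈ s, |x k t| ^ q ≤ 1) :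
    ∑ k ∈ s, ‖T (x k)‖ ^ p ≤ M := by
  obtain ⟨r, rfl⟩ := Nat.exists_eq_add_of_le hs
  let x' : Fin (s.card + r) → C(K, ℝ) := Fin.append (fun i => x (s.equivFin.symm i)) 0
  have hsum : ∀ F : C(K, ℝ) → ℝ, F 0 = 0 → ∑ k, F (x' k) = ∑ k ∈ s, F (x k) := fun F hF => by
    simp only [x', Fin.sum_univ_add, Fin.append_left, Fin.append_right, Pi.zero_apply, hF,
      Finset.sum_const_zero, add_zero]
    rw [s.equivFin.symm.sum_comp fun k : s => F (x k), Finset.sum_coe_sort s fun k => F (x k)]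
  rw [← hsum (fun f => ‖T f‖ ^ p) (by simp [hp])]
  refine h x' fun t => ?_
  rw [hsum (fun f => |f t| ^ q) (by simp [hq])]
  exact hx t

lemma mono_card {n : ℕ} (h : HasSummingBound p q m M T) (hp : p ≠ 0) (hq : q ≠ 0)
    (hnm : n ≤ m) : HasSummingBound p q n M T := fun _ hx =>
  h.sum_le_of_card_le hp hq (by simpa using hnm) hx

lemma sum_le_mul (h : HasSummingBound p p m M T) (hp : 0 < p) {α : Type*} {s : Finset α}
    (hs : s.card ≤ m) {x : α → C(K, ℝ)} {A : ℝ} (hA : 0 ≤ A)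
    (hx : ∀ t, ∑ k ∈ s, |x k t| ^ p ≤ A) : ∑ k ∈ s, ‖T (x k)‖ ^ p ≤ M * A := by
  rcases hA.eq_or_lt with rfl | hA
  · have hx0 : ∀ k ∈ s, x k = 0 := fun k hk => ContinuousMap.ext fun t => by
      have := (Finset.single_le_sum (f := fun k => |x k t| ^ p)
        (fun i _ => Real.rpow_nonneg (abs_nonneg _) p) hk).trans (hx t)
      simpa [hp.ne'] using (Real.rpow_eq_zero (abs_nonneg _) hp.ne').1
        (this.antisymm (Real.rpow_nonneg (abs_nonneg _) p))
    rw [mul_zero, Finset.sum_eq_zero fun k hk => by simp [hx0 k hk, hp.ne']]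
  · have hpow : (A ^ (1 / p)) ^ p = A := by
      rw [← Real.rpow_mul hA.le, one_div_mul_cancel hp.ne', Real.rpow_one]
    have hr : 0 < A ^ (1 / p) := by positivity
    have hscaled : ∑ k ∈ s, ‖T ((A ^ (1 / p))⁻¹ • x k)‖ ^ p ≤ M := by
      refine h.sum_le_of_card_le hp.ne' hp.ne' hs fun t => ?_
      simp only [ContinuousMap.smul_apply, smul_eq_mul, abs_mul, abs_inv, abs_of_pos hr,
        Real.mul_rpow (inv_nonneg.2 hr.le) (abs_nonneg _), Real.inv_rpow hr.le, hpow,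
        ← Finset.mul_sum]
      exact inv_mul_le_one_of_le₀ (hx t) hA.le
    simp only [map_smul, norm_smul, norm_inv, Real.norm_of_nonneg hr.le,
      Real.mul_rpow (inv_nonneg.2 hr.le) (norm_nonneg _), Real.inv_rpow hr.le, hpow,
      ← Finset.mul_sum] at hscaled
    rwa [inv_mul_le_iff₀ hA, mul_comm] at hscaled

lemma exponent_down {P : ℝ} (h : HasSummingBound p p m (P ^ p) T) (hP : 0 ≤ P) (hq : 0 < q)
    (hqp : q ≤ p) : HasSummingBound q q m ((m : ℝ) ^ (1 - q / p) * P ^ q) T := fun x hx => by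
  have hp : 0 < p := hq.trans_le hqp
  have hbound := h.weak_exponent_down hq hqp x hx
  calc ∑ k, ‖T (x k)‖ ^ q ≤ (m : ℝ) ^ (1 - q / p) * (∑ k, ‖T (x k)‖ ^ p) ^ (q / p) := by
        simpa using sum_rpow_le_card_rpow_mul (s := Finset.univ)
          (fun k _ => norm_nonneg (T (x k))) hq hqp
    _ ≤ (m : ℝ) ^ (1 - q / p) * (P ^ p) ^ (q / p) := by gcongr
    _ = (m : ℝ) ^ (1 - q / p) * P ^ q := by
        rw [← Real.rpow_mul hP, mul_div_cancel₀ _ hp.ne']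

lemma exponent_up {P : ℝ} (h : HasSummingBound p p m (P ^ p) T) (hP : 0 ≤ P) (hp : 0 < p)
    (hpq : p ≤ q) : HasSummingBound q q m (P ^ q) T := fun x hx => by
  rcases hpq.eq_or_lt with rfl | hpq
  · exact h x hx
  set S := ∑ k, ‖T (x k)‖ ^ q
  set c : Fin m → ℝ := fun k => ‖T (x k)‖ ^ ((q - p) / p) with hc
  have hc0 : ∀ k, 0 ≤ c k := fun k => by positivity
  have hcp : ∀ k, c k ^ p = ‖T (x k)‖ ^ (q - p) := fun k => by
    rw [hc, ← Real.rpow_mul (norm_nonneg _), div_mul_cancel₀ _ hp.ne']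
  have hweak : ∀ t, ∑ k, |(c k • x k) t| ^ p ≤ S ^ ((q - p) / q) := fun t => by
    have hholder := sum_rpow_sub_mul_rpow_le (s := Finset.univ)
      (fun k _ => norm_nonneg (T (x k))) (fun k _ => abs_nonneg (x k t)) hp hpq
    simp only [ContinuousMap.smul_apply, smul_eq_mul, abs_mul, abs_of_nonneg (hc0 _),
      Real.mul_rpow (hc0 _) (abs_nonneg _), hcp]
    refine hholder.trans (mul_le_of_le_one_right (by positivity) ?_)
    exact Real.rpow_le_one (Finset.sum_nonneg fun k _ => by positivity) (hx t)
      (div_nonneg hp.le (hp.trans hpq).le)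
  have hstrong : S ≤ P ^ p * S ^ ((q - p) / q) := by
    refine le_of_eq_of_le ?_ (h.sum_le_mul hp (s := Finset.univ) (by simp) (by positivity) hweak)
    refine Finset.sum_congr rfl fun k _ => ?_
    rw [map_smul, norm_smul, Real.norm_of_nonneg (hc0 k), Real.mul_rpow (hc0 k) (norm_nonneg _),
      hcp, ← Real.rpow_add_of_nonneg (norm_nonneg _) (sub_nonneg.2 hpq.le) hp.le, sub_add_cancel]
  exact le_rpow_of_le_rpow_mul_rpow (by positivity) hP hp (hp.trans hpq) hstrong

lemma interpolate {P : ℝ} (h : HasSummingBound p p m (P ^ p) T) (hP : 0 ≤ P) (hm : m ≠ 0)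
    (hq : 0 < q) (hqp : q ≤ p) {C : ℝ} {N : ℕ}
    (hfull : HasSummingBound q q N (C * ((m : ℝ) ^ (1 - q / p) * P ^ q)) T) :
    HasSummingBound p q N ((1 + C) * P ^ p) T := fun x hx => by
  have hp : 0 < p := hq.trans_le hqp
  have hxp : ∀ t, ∑ k, |x k t| ^ p ≤ 1 := fun t =>
    sum_rpow_le_one_of_le (fun k _ => abs_nonneg (x k t)) hq hqp (hx t)
  have hcancel : (P / (m : ℝ) ^ (1 / p)) ^ (p - q) * (m : ℝ) ^ (1 - q / p) = P ^ (p - q) := by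
    rw [Real.div_rpow hP (by positivity), ← Real.rpow_mul (by positivity)]
    rw [show 1 / p * (p - q) = 1 - q / p by field_simp, div_mul_cancel₀]
    positivity
  calc ∑ k, ‖T (x k)‖ ^ p
      ≤ P ^ p + (P / (m : ℝ) ^ (1 / p)) ^ (p - q) * ∑ k, ‖T (x k)‖ ^ q :=
        sum_rpow_le_add_mul_sum_rpow (fun k => norm_nonneg _) hq.le hqp hp hm hP fun u _ hu =>
          h.sum_le_of_card_le hp.ne' hp.ne' hu fun t =>
            (Finset.sum_le_univ_sum_of_nonneg fun k => by positivity).trans (hxp t)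
    _ ≤ P ^ p + (P / (m : ℝ) ^ (1 / p)) ^ (p - q) * (C * ((m : ℝ) ^ (1 - q / p) * P ^ q)) := by
        gcongr
        exact hfull x hx
    _ = P ^ p + C * (P ^ (p - q) * P ^ q) := by rw [← hcancel]; ring
    _ = (1 + C) * P ^ p := by
        rw [← Real.rpow_add_of_nonneg hP (sub_nonneg.2 hqp) hq.le, sub_add_cancel]
        ring

end HasSummingBound

lemma finrank_range_comp_le [CompactSpace K] {n : ℕ} (hT : RankLE T n) {E : Type*} [AddCommGroup E]
    [Module ℝ E] (S : E →ₗ[ℝ] C(K, ℝ)) :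
    Module.finrank ℝ (LinearMap.range ((T : C(K, ℝ) →ₗ[ℝ] Y) ∘ₗ S)) ≤ n := by
  have := hT.1
  exact (Submodule.finrank_mono (LinearMap.range_comp_le_range _ _)).trans hT.2

lemma hasSummingBound_two_of_rankLE [CompactSpace K] {n : ℕ} (hT : RankLE T n)
    (h : HasSummingBound 2 2 n M T) (m : ℕ) : HasSummingBound 2 2 m (4 * M) T := fun x hx => by
  let e := EuclideanSpace.basisFun (Fin m) ℝ
  let S := e.toBasis.constr ℝ x
  have hSe : ∀ k, S (e k) = x k := fun k => by
    simp only [S, ← e.coe_toBasis, Module.Basis.constr_basis]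
  have heval : ∀ v t, S v t = inner ℝ (WithLp.toLp 2 fun k => x k t) v := fun v t => by
    simp [S, e, Module.Basis.constr_apply_fintype, PiLp.inner_apply]
  obtain ⟨s, v, hcard, hbessel, hsum⟩ :=
    exists_finset_sum_norm_map_sq_le e ((T : C(K, ℝ) →ₗ[ℝ] Y) ∘ₗ S)
  have hv : ∑ k ∈ s, ‖T (S (v k))‖ ^ (2 : ℝ) ≤ M := by
    refine h.sum_le_of_card_le two_ne_zero two_ne_zero
      (hcard.trans (finrank_range_comp_le hT S)) fun t => ?_
    simp only [heval, real_inner_comm (v _), Real.rpow_two, sq_abs]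
    refine (hbessel _).trans ?_
    simpa [EuclideanSpace.norm_sq_eq] using hx t
  simp only [LinearMap.comp_apply, hSe, ContinuousLinearMap.coe_coe] at hsum
  simp only [Real.rpow_two] at hv ⊢
  linarith

end SummingBounds

section PietschDomination

lemma exists_positiveLinearMap_nonneg {E ι : Type*} [AddCommGroup E] [PartialOrder E]
    [IsOrderedAddMonoid E] [Module ℝ E] [PosSMulMono ℝ E] {e : E}
    (he : ∀ y : E, ∃ r : ℝ, 0 ≤ r • e + y) {v : ι → E}
    (hv : ∀ c : ι →₀ ℝ, 0 ≤ c → ∀ a : ℝ, Finsupp.linearCombination ℝ v c ≤ a • e → 0 ≤ a) :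
    ∃ L : E →ₚ[ℝ] ℝ, L e = 1 ∧ ∀ i, 0 ≤ L (v i) := by
  let cone : PointedCone ℝ E :=
    { carrier := {f | ∃ c : ι →₀ ℝ, 0 ≤ c ∧ Finsupp.linearCombination ℝ v c ≤ f}
      zero_mem' := ⟨0, le_rfl, by simp⟩
      add_mem' := fun ⟨c, hc, hcf⟩ ⟨d, hd, hdg⟩ =>
        ⟨c + d, add_nonneg hc hd, by rw [map_add]; exact add_le_add hcf hdg⟩
      smul_mem' := fun r _ ⟨c, hc, hcf⟩ =>
        ⟨(r : ℝ) • c, smul_nonneg r.2 hc, by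
          rw [map_smul]; exact smul_le_smul_of_nonneg_left hcf r.2⟩ }
  have hcone : ∀ f, 0 ≤ f → f ∈ cone := fun f hf => ⟨0, le_rfl, by simpa using hf⟩
  have he0 : e ≠ 0 := fun h => by
    have := hv 0 le_rfl (-1) (by simp [h])
    linarith
  obtain ⟨g, hg_ext, hg_nonneg⟩ := riesz_extension cone (LinearPMap.mkSpanSingleton e (1 : ℝ) he0)
    (by
      rintro ⟨_, hx⟩ ⟨c, hc, hcf⟩
      obtain ⟨a, rfl⟩ := Submodule.mem_span_singleton.1 hx
      rw [LinearPMap.mkSpanSingleton'_apply, smul_eq_mul, mul_one]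
      exact hv c hc a hcf)
    (fun y => by
      obtain ⟨r, hr⟩ := he y
      exact ⟨⟨r • e, Submodule.smul_mem _ _ (Submodule.mem_span_singleton_self e)⟩, hcone _ hr⟩)
  refine ⟨PositiveLinearMap.mk₀ g fun f hf => hg_nonneg f (hcone f hf), ?_,
    fun i => hg_nonneg (v i) ⟨Finsupp.single i 1, by simp, by simp⟩⟩
  exact (hg_ext ⟨e, Submodule.mem_span_singleton_self e⟩).trans
    (LinearPMap.mkSpanSingleton_apply ℝ _ he0 1)

variable {K : Type*} [TopologicalSpace K]

lemma exists_positiveLinearMap_le_mul [CompactSpace K] [Nonempty K] {ι : Type*} {G : ι → ℝ}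
    {h : ι → C(K, ℝ)} {M : ℝ} (hh : ∀ i, 0 ≤ h i)
    (H : ∀ (s : Finset ι) (c : ι → ℝ), (∀ i, 0 ≤ c i) → ∀ A, 0 ≤ A →
      (∀ t, ∑ i ∈ s, c i * h i t ≤ A) → ∑ i ∈ s, c i * G i ≤ M * A) :
    ∃ L : C(K, ℝ) →ₚ[ℝ] ℝ, L 1 = 1 ∧ ∀ i, G i ≤ M * L (h i) := by
  obtain ⟨L, hL_one, hL⟩ := exists_positiveLinearMap_nonneg (e := (1 : C(K, ℝ)))
    (v := fun i => M • h i - G i • 1)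
    (fun y => ⟨‖y‖, fun t => by
      have := (abs_le.1 (y.norm_coe_le_norm t)).1
      change 0 ≤ ‖y‖ * 1 + y t
      linarith⟩)
    (fun c hc a hca => by
      obtain ⟨t, -, ht⟩ := isCompact_univ.exists_isMaxOn Set.univ_nonempty
        (f := fun t => ∑ i ∈ c.support, c i * h i t) (by fun_prop)
      have hG : _ ≤ M * ∑ i ∈ c.support, c i * h i t := H c.support c hc _
        (Finset.sum_nonneg fun i _ => mul_nonneg (hc i) (hh i t)) fun t' => ht (Set.mem_univ t')
      have hca_t := ContinuousMap.le_def.1 hca t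
      simp only [Finsupp.linearCombination_apply, Finsupp.sum, ContinuousMap.sum_apply,
        ContinuousMap.smul_apply, ContinuousMap.sub_apply, ContinuousMap.one_apply, smul_eq_mul,
        mul_one, mul_sub, Finset.sum_sub_distrib, mul_left_comm _ M, ← Finset.mul_sum] at hca_t
      linarith)
  refine ⟨L, hL_one, fun i => ?_⟩
  have hi := hL i
  rw [map_sub, map_smul, map_smul, hL_one, smul_eq_mul, smul_eq_mul, mul_one] at hi
  exact sub_nonneg.1 hi

/-- The function `|x| ^ p` as an element of `C(K)`. -/
def absPow (p : ℝ) (hp : 0 ≤ p) (x : C(K, ℝ)) : C(K, ℝ) where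
  toFun t := |x t| ^ p
  continuous_toFun := x.continuous.abs.rpow_const fun _ => Or.inr hp

@[simp]
lemma absPow_apply (p : ℝ) (hp : 0 ≤ p) (x : C(K, ℝ)) (t : K) : absPow p hp x t = |x t| ^ p :=
  rfl

variable {Y : Type*} [NormedAddCommGroup Y] [NormedSpace ℝ Y] {T : C(K, ℝ) →L[ℝ] Y} {p M : ℝ}

lemma exists_pietsch_functional [CompactSpace K] [Nonempty K] (hp : 0 < p)
    (h : ∀ m, HasSummingBound p p m M T) :
    ∃ L : C(K, ℝ) →ₚ[ℝ] ℝ, L 1 = 1 ∧ ∀ x, ‖T x‖ ^ p ≤ M * L (absPow p hp.le x) := by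
  refine exists_positiveLinearMap_le_mul (fun x t => Real.rpow_nonneg (abs_nonneg (x t)) p)
    fun s c hc A hA hx => ?_
  have hc' : ∀ x, 0 ≤ c x ^ (1 / p) := fun x => Real.rpow_nonneg (hc x) _
  have hpow : ∀ x, (c x ^ (1 / p)) ^ p = c x := fun x => by
    rw [← Real.rpow_mul (hc x), one_div_mul_cancel hp.ne', Real.rpow_one]
  have hsum := (h s.card).sum_le_mul hp (s := s) (x := fun x => c x ^ (1 / p) • x) le_rfl hA
    fun t => by
      simpa only [ContinuousMap.smul_apply, smul_eq_mul, abs_mul, abs_of_nonneg (hc' _),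
        Real.mul_rpow (hc' _) (abs_nonneg _), hpow, absPow_apply] using hx t
  simpa only [map_smul, norm_smul, Real.norm_of_nonneg (hc' _),
    Real.mul_rpow (hc' _) (norm_nonneg _), hpow] using hsum

lemma hasSummingBound_of_le_functional (hp : 0 ≤ p) (hM : 0 ≤ M) {L : C(K, ℝ) →ₚ[ℝ] ℝ}
    (h : ∀ x, ‖T x‖ ^ p ≤ M * L (absPow p hp x)) (m : ℕ) :
    HasSummingBound p p m (M * L 1) T := fun x hx => by
  calc ∑ k, ‖T (x k)‖ ^ p ≤ M * L (∑ k, absPow p hp (x k)) := by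
        rw [map_sum, Finset.mul_sum]
        exact Finset.sum_le_sum fun k _ => h (x k)
    _ ≤ M * L 1 := by
        refine mul_le_mul_of_nonneg_left (OrderHomClass.mono L fun t => ?_) hM
        change (∑ k, absPow p hp (x k)) t ≤ 1
        rw [ContinuousMap.sum_apply]
        exact hx t

lemma norm_map_sum_inv_sqrt_smul_sq_le {ι : Type*} [Fintype ι] {x : ι → C(K, ℝ)}
    (hx : ∀ t, ∑ k, |x k t| ≤ 1) {L : C(K, ℝ) →ₚ[ℝ] ℝ} (hM : 0 ≤ M)
    (hL : ∀ f, ‖T f‖ ^ (2 : ℝ) ≤ M * L (absPow 2 zero_le_two f)) (a : ι → ℝ) :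
    ‖T (∑ k, a k • (√(L |x k|))⁻¹ • x k)‖ ^ 2 ≤ M * ∑ k, a k ^ 2 := by
  set μ : ι → ℝ := fun k => L |x k|
  have hμ0 : ∀ k, 0 ≤ μ k := fun k => map_nonneg L (abs_nonneg _)
  have hcauchy : absPow 2 zero_le_two (∑ k, a k • (√(μ k))⁻¹ • x k) ≤
      ∑ k, (a k ^ 2 * (μ k)⁻¹) • |x k| := fun t => by
    change |(∑ k, a k • (√(μ k))⁻¹ • x k) t| ^ (2 : ℝ) ≤ (∑ k, (a k ^ 2 * (μ k)⁻¹) • |x k|) t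
    simp only [Real.rpow_two, sq_abs, ContinuousMap.sum_apply, ContinuousMap.smul_apply,
      ContinuousMap.abs_apply, smul_eq_mul]
    refine (Finset.sum_sq_le_sum_mul_sum_of_sq_le_mul Finset.univ
      (f := fun k => a k ^ 2 * (μ k)⁻¹ * |x k t|) (g := fun k => |x k t|)
      (fun k _ => mul_nonneg (mul_nonneg (sq_nonneg _) (inv_nonneg.2 (hμ0 k))) (abs_nonneg _))
      (fun k _ => abs_nonneg _) fun k _ => le_of_eq ?_).trans
      (mul_le_of_le_one_right (Finset.sum_nonneg fun k _ =>
        mul_nonneg (mul_nonneg (sq_nonneg _) (inv_nonneg.2 (hμ0 k))) (abs_nonneg _)) (hx t))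
    rw [mul_pow, mul_pow, inv_pow, Real.sq_sqrt (hμ0 k), ← sq_abs (x k t)]
    ring
  rw [← Real.rpow_two]
  refine (hL _).trans (mul_le_mul_of_nonneg_left ((OrderHomClass.mono L hcauchy).trans ?_) hM)
  simp only [map_sum, map_smul, smul_eq_mul]
  exact Finset.sum_le_sum fun k _ => by
    rw [mul_assoc]
    exact mul_le_of_le_one_right (sq_nonneg _) inv_mul_le_one

lemma norm_map_eq_sqrt_mul_norm_map {x : C(K, ℝ)} (hx : ∀ t, |x t| ≤ 1) {L : C(K, ℝ) →ₚ[ℝ] ℝ}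
    (hM : 0 ≤ M) (hL : ∀ f, ‖T f‖ ^ (2 : ℝ) ≤ M * L (absPow 2 zero_le_two f)) :
    ‖T x‖ = √(L |x|) * ‖T ((√(L |x|))⁻¹ • x)‖ := by
  rcases (map_nonneg L (abs_nonneg x)).eq_or_lt with h0 | hpos
  · have hsq : absPow 2 zero_le_two x ≤ |x| := fun t => by
      change |x t| ^ (2 : ℝ) ≤ |x t|
      rw [Real.rpow_two]
      exact pow_le_of_le_one (abs_nonneg _) (hx t) two_ne_zero
    have hTx := (hL x).trans (mul_le_mul_of_nonneg_left (OrderHomClass.mono L hsq) hM)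
    rw [← h0, mul_zero, Real.rpow_two] at hTx
    rw [← h0, Real.sqrt_zero, zero_mul]
    exact pow_eq_zero_iff two_ne_zero |>.1 (hTx.antisymm (sq_nonneg _))
  · rw [map_smul, norm_smul, norm_inv, Real.norm_of_nonneg (Real.sqrt_nonneg _),
      mul_inv_cancel_left₀ (Real.sqrt_pos.2 hpos).ne']

/- Rescaling `x k` by `√(L |x k|)`, where `L` is a Pietsch functional for `π_2(T)`, turns `T` into
an operator on a Euclidean space, whose Hilbert-Schmidt norm is controlled by its rank. -/
lemma hasSummingBound_one_of_two [CompactSpace K] [Nonempty K] {n : ℕ} (hT : RankLE T n)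
    (hM : 0 ≤ M) (h : ∀ m, HasSummingBound 2 2 m M T) (m : ℕ) :
    HasSummingBound 1 1 m √(n * M) T := by
  intro x hx
  simp only [Real.rpow_one] at hx ⊢
  obtain ⟨L, hL_one, hL⟩ := exists_pietsch_functional zero_lt_two h
  let μ : Fin m → ℝ := fun k => L |x k|
  have hμ_sum : ∑ k, μ k ≤ 1 := by
    rw [← hL_one, ← map_sum]
    refine OrderHomClass.mono L fun t => ?_
    change (∑ k, |x k|) t ≤ 1
    simpa only [ContinuousMap.sum_apply, ContinuousMap.abs_apply] using hx t
  let e := EuclideanSpace.basisFun (Fin m) ℝ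
  let S := e.toBasis.constr ℝ fun k => (√(μ k))⁻¹ • x k
  have hSe : ∀ k, S (e k) = (√(μ k))⁻¹ • x k := fun k => by
    simp only [S, ← e.coe_toBasis, Module.Basis.constr_basis]
  have hHS : ∑ k, ‖T (S (e k))‖ ^ 2 ≤ n * M := by
    refine (sum_norm_map_sq_le e ((T : C(K, ℝ) →ₗ[ℝ] Y) ∘ₗ S) fun a => ?_).trans
      (mul_le_mul_of_nonneg_right (Nat.cast_le.2 (finrank_range_comp_le hT S)) hM)
    simpa [S, e, Module.Basis.constr_apply_fintype, EuclideanSpace.real_norm_sq_eq]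
      using norm_map_sum_inv_sqrt_smul_sq_le hx hM hL a
  have hx1 : ∀ k t, |x k t| ≤ 1 := fun k t =>
    (Finset.single_le_sum (f := fun k => |x k t|) (fun _ _ => abs_nonneg _)
      (Finset.mem_univ k)).trans (hx t)
  calc ∑ k, ‖T (x k)‖ = ∑ k, √(μ k) * ‖T (S (e k))‖ := by
        simp only [hSe]
        exact Finset.sum_congr rfl fun k _ => norm_map_eq_sqrt_mul_norm_map (hx1 k) hM hL
    _ ≤ √(∑ k, √(μ k) ^ 2) * √(∑ k, ‖T (S (e k))‖ ^ 2) := Real.sum_mul_le_sqrt_mul_sqrt _ _ _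
    _ ≤ 1 * √(n * M) := by
        refine mul_le_mul (Real.sqrt_le_one.2 ?_) (Real.sqrt_le_sqrt hHS) (by positivity)
          zero_le_one
        simpa only [Real.sq_sqrt (map_nonneg L (abs_nonneg _)), μ] using hμ_sum
    _ = √(n * M) := one_mul _

end PietschDomination

section PisierDomination

variable {K : Type*} [TopologicalSpace K] {Y : Type*} [NormedAddCommGroup Y] [NormedSpace ℝ Y]
  {p B : ℝ} {T : C(K, ℝ) →L[ℝ] Y}

lemma exists_norming_functional (T : C(K, ℝ) →L[ℝ] Y) (hp : 1 < p) {ι : Type*} [Fintype ι]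
    (x : ι → C(K, ℝ)) :
    ∃ φ : C(K, ℝ) →ₗ[ℝ] ℝ, φ 1 = ∑ k, ‖T (x k)‖ ^ p ∧
      ∀ g, p * φ g ≤ (p - 1) * ∑ k, ‖T (x k)‖ ^ p + ∑ k, ‖T (x k * g)‖ ^ p := by
  choose y hy_norm hy using fun k => exists_dual_vector'' ℝ (T (x k))
  let φ : C(K, ℝ) →ₗ[ℝ] ℝ := ∑ k, ‖T (x k)‖ ^ (p - 1) •
    ((y k : Y →ₗ[ℝ] ℝ) ∘ₗ (T : C(K, ℝ) →ₗ[ℝ] Y) ∘ₗ LinearMap.mulLeft ℝ (x k))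
  have hφ : ∀ g, φ g = ∑ k, ‖T (x k)‖ ^ (p - 1) * y k (T (x k * g)) := fun g => by simp [φ]
  refine ⟨φ, ?_, fun g => ?_⟩
  · rw [hφ]
    refine Finset.sum_congr rfl fun k _ => ?_
    rw [mul_one, hy, RCLike.ofReal_real_eq_id, id, rpow_sub_one_mul_self hp.le (norm_nonneg _)]
  · rw [hφ, Finset.mul_sum, Finset.mul_sum, ← Finset.sum_add_distrib]
    refine Finset.sum_le_sum fun k _ =>
      le_trans ?_ (mul_rpow_sub_one_mul_le hp (norm_nonneg _) (norm_nonneg _))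
    gcongr
    exact (le_abs_self _).trans (((y k).le_opNorm _).trans
      (mul_le_of_le_one_left (norm_nonneg _) (hy_norm k)))

lemma exists_near_extremal_family (h : ∀ m, HasSummingBound p 1 m B T) {δ : ℝ} (hδ : 0 < δ) :
    ∃ N, ∃ x : Fin N → C(K, ℝ), (∀ t, ∑ k, |x k t| ≤ 1) ∧
      ∀ m, HasSummingBound p 1 m (∑ k, ‖T (x k)‖ ^ p + δ) T := by
  let V : Set ℝ := {r | ∃ N, ∃ x : Fin N → C(K, ℝ), (∀ t, ∑ k, |x k t| ≤ 1) ∧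
    ∑ k, ‖T (x k)‖ ^ p = r}
  have hV : BddAbove V := ⟨B, by
    rintro _ ⟨N, x, hx, rfl⟩
    exact h N x (by simpa only [Real.rpow_one] using hx)⟩
  obtain ⟨_, ⟨N, x, hx, rfl⟩, hlt⟩ := exists_lt_of_lt_csSup
    (⟨0, 0, Fin.elim0, by simp, by simp⟩ : V.Nonempty) (sub_lt_self (sSup V) hδ)
  refine ⟨N, x, hx, fun m z hz => ?_⟩
  have := le_csSup hV ⟨m, z, by simpa only [Real.rpow_one] using hz, rfl⟩
  linarith

/- For a near-extremal family `x`, compare the two families `(x k * g)` and `(f, x k * (1 - f))`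
with `x` itself, and linearise by Young's inequality. -/
lemma exists_functional_norm_rpow_le_add (hp : 1 < p) (h : ∀ m, HasSummingBound p 1 m B T) {δ : ℝ}
    (hδ : 0 < δ) :
    ∃ φ : C(K, ℝ) →ₗ[ℝ] ℝ, (∀ g, (∀ t, |g t| ≤ 1) → φ g ≤ B) ∧
      ∀ f, 0 ≤ f → f ≤ 1 → ‖T f‖ ^ p ≤ δ + p * φ f := by
  obtain ⟨N, x, hx, hextremal⟩ := exists_near_extremal_family h hδ
  obtain ⟨φ, hφ_one, hφ⟩ := exists_norming_functional T hp x
  refine ⟨φ, fun g hg => ?_, fun f hf0 hf1 => ?_⟩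
  · have hxB := h N x (by simpa only [Real.rpow_one] using hx)
    have hgB := h N (fun k => x k * g) fun t => by
      simp only [Real.rpow_one, ContinuousMap.mul_apply, abs_mul, ← Finset.sum_mul]
      exact mul_le_one₀ (hx t) (abs_nonneg _) (hg t)
    have := mul_le_mul_of_nonneg_left hxB (sub_nonneg.2 hp.le)
    nlinarith [hφ g]
  · have hcons := hextremal (N + 1) (Fin.cons f fun k => x k * (1 - f)) fun t => by
      have hft0 : 0 ≤ f t := hf0 t
      have hft1 : f t ≤ 1 := hf1 t
      simp only [Fin.sum_univ_succ, Fin.cons_zero, Fin.cons_succ, Real.rpow_one,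
        ContinuousMap.mul_apply, ContinuousMap.sub_apply, ContinuousMap.one_apply, abs_mul,
        ← Finset.sum_mul, abs_of_nonneg hft0, abs_of_nonneg (sub_nonneg.2 hft1)]
      nlinarith [hx t]
    have hyoung := hφ (1 - f)
    simp only [Fin.sum_univ_succ, Fin.cons_zero, Fin.cons_succ] at hcons
    rw [map_sub, hφ_one] at hyoung
    linarith

lemma map_le_mul_of_abs_le {φ : C(K, ℝ) →ₗ[ℝ] ℝ} (hφ : ∀ g, (∀ t, |g t| ≤ 1) → φ g ≤ B) {A : ℝ}
    (hA : 0 ≤ A) {f : C(K, ℝ)} (hf : ∀ t, |f t| ≤ A) : φ f ≤ B * A := by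
  rcases hA.eq_or_lt with rfl | hA
  · have hf0 : f = 0 := ContinuousMap.ext fun t => abs_nonpos_iff.1 (hf t)
    rw [hf0, map_zero, mul_zero]
  · have := hφ (A⁻¹ • f) fun t => by
      rw [ContinuousMap.smul_apply, smul_eq_mul, abs_mul, abs_inv, abs_of_pos hA]
      exact inv_mul_le_one_of_le₀ (hf t) hA.le
    rwa [map_smul, smul_eq_mul, inv_mul_le_iff₀ hA, mul_comm] at this

lemma sum_mul_norm_rpow_le (hp : 1 < p) (h : ∀ m, HasSummingBound p 1 m B T) {ι : Type*}
    {s : Finset ι} {f : ι → C(K, ℝ)} (hf0 : ∀ i, 0 ≤ f i) (hf1 : ∀ i, f i ≤ 1) {c : ι → ℝ}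
    (hc : ∀ i, 0 ≤ c i) {A : ℝ} (hA : 0 ≤ A) (hs : ∀ t, ∑ i ∈ s, c i * f i t ≤ A) :
    ∑ i ∈ s, c i * ‖T (f i)‖ ^ p ≤ p * B * A := by
  have hC : 0 ≤ ∑ i ∈ s, c i := Finset.sum_nonneg fun i _ => hc i
  refine le_of_forall_pos_le_add fun ε hε => ?_
  obtain ⟨φ, hφB, hφ⟩ := exists_functional_norm_rpow_le_add hp h
    (show 0 < ε / (∑ i ∈ s, c i + 1) by positivity)
  have hφ_sum : φ (∑ i ∈ s, c i • f i) ≤ B * A := map_le_mul_of_abs_le hφB hA fun t => by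
    have hsum0 : 0 ≤ ∑ i ∈ s, c i * f i t :=
      Finset.sum_nonneg fun i _ => mul_nonneg (hc i) (hf0 i t)
    simpa only [ContinuousMap.sum_apply, ContinuousMap.smul_apply, smul_eq_mul,
      abs_of_nonneg hsum0] using hs t
  calc ∑ i ∈ s, c i * ‖T (f i)‖ ^ p
      ≤ ∑ i ∈ s, c i * (ε / (∑ i ∈ s, c i + 1) + p * φ (f i)) :=
        Finset.sum_le_sum fun i _ => mul_le_mul_of_nonneg_left (hφ _ (hf0 i) (hf1 i)) (hc i)
    _ = p * φ (∑ i ∈ s, c i • f i) + (∑ i ∈ s, c i) * (ε / (∑ i ∈ s, c i + 1)) := by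
        simp only [map_sum, map_smul, smul_eq_mul, mul_add, Finset.sum_add_distrib, Finset.sum_mul,
          Finset.mul_sum, mul_left_comm p, add_comm]
    _ ≤ p * (B * A) + ε := by
        gcongr
        rw [mul_div_assoc', div_le_iff₀ (by positivity)]
        nlinarith
    _ = p * B * A + ε := by rw [mul_assoc]

lemma exists_pisier_functional [CompactSpace K] [Nonempty K] (hp : 1 < p)
    (h : ∀ m, HasSummingBound p 1 m B T) :
    ∃ L : C(K, ℝ) →ₚ[ℝ] ℝ, L 1 = 1 ∧ ∀ f, 0 ≤ f → f ≤ 1 → ‖T f‖ ^ p ≤ p * B * L f := by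
  obtain ⟨L, hL_one, hL⟩ := exists_positiveLinearMap_le_mul (ι := Set.Icc (0 : C(K, ℝ)) 1)
    (G := fun f => ‖T f‖ ^ p) (h := Subtype.val) (fun f => f.2.1) fun _ _ hc _ hA hs =>
      sum_mul_norm_rpow_le hp h (fun f => f.2.1) (fun f => f.2.2) hc hA hs
  exact ⟨L, hL_one, fun f hf0 hf1 => hL ⟨f, hf0, hf1⟩⟩

end PisierDomination

section DyadicLayers

variable {K : Type*} [TopologicalSpace K] {p : ℝ}

lemma rpow_sub_one_mul_sub_min_le {a b y : ℝ} (hp : 1 ≤ p) (ha : 0 ≤ a) (hab : a ≤ b) :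
    a ^ (p - 1) * (min y b - min y a) ≤ y ^ (p - 1) * (min y b - min y a) := by
  rcases le_total y a with hya | hay
  · rw [min_eq_left hya, min_eq_left (hya.trans hab), sub_self, mul_zero, mul_zero]
  · exact mul_le_mul_of_nonneg_right (Real.rpow_le_rpow ha hay (sub_nonneg.2 hp))
      (sub_nonneg.2 (min_le_min_left y hab))

lemma add_rpow_le_mul_rpow {a b : ℝ} (hp : 1 ≤ p) (ha : 0 ≤ a) (hb : 0 ≤ b) :
    (a + b) ^ p ≤ 2 ^ (p - 1) * (a ^ p + b ^ p) := by
  simpa [Fin.sum_univ_two] using Real.rpow_sum_le_const_mul_sum_rpow_of_nonneg (f := ![a, b])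
    Finset.univ hp (by simp [Fin.forall_fin_two, ha, hb])

lemma add_add_rpow_le_mul_rpow {a b c : ℝ} (hp : 1 ≤ p) (ha : 0 ≤ a) (hb : 0 ≤ b) (hc : 0 ≤ c) :
    (a + b + c) ^ p ≤ 3 ^ (p - 1) * (a ^ p + b ^ p + c ^ p) := by
  simpa [Fin.sum_univ_three] using Real.rpow_sum_le_const_mul_sum_rpow_of_nonneg (f := ![a, b, c])
    Finset.univ hp (by simp [Fin.forall_fin_succ, ha, hb, hc])

/-- The truncation of `x` at height `r`. -/
def truncation (x : C(K, ℝ)) (r : ℝ) : C(K, ℝ) :=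
  x ⊓ ContinuousMap.const K r

/-- The part of `x` between the heights `2 ^ j` and `2 ^ (j + 1)`. -/
def dyadicLayer (x : C(K, ℝ)) (j : ℕ) : C(K, ℝ) :=
  truncation x (2 ^ (j + 1)) - truncation x (2 ^ j)

lemma dyadicLayer_apply (x : C(K, ℝ)) (j : ℕ) (t : K) :
    dyadicLayer x j t = min (x t) (2 ^ (j + 1)) - min (x t) (2 ^ j) :=
  rfl

lemma truncation_add_sum_dyadicLayer_add (x : C(K, ℝ)) (J : ℕ) :
    truncation x 1 + ∑ j ∈ Finset.range J, dyadicLayer x j + (x - truncation x (2 ^ J)) = x := by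
  simp only [dyadicLayer, Finset.sum_range_sub fun j => truncation x (2 ^ j), pow_zero]
  abel

lemma dyadicLayer_nonneg (x : C(K, ℝ)) (j : ℕ) : 0 ≤ dyadicLayer x j := fun t =>
  sub_nonneg.2 (min_le_min_left (x t) (pow_le_pow_right₀ one_le_two j.le_succ))

lemma dyadicLayer_apply_le (x : C(K, ℝ)) (j : ℕ) (t : K) : dyadicLayer x j t ≤ 2 ^ j := by
  have hpow : (2 : ℝ) ^ (j + 1) = 2 ^ j + 2 ^ j := by ring
  have hpos : (0 : ℝ) < 2 ^ j := by positivity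
  rw [dyadicLayer_apply, hpow]
  rcases min_cases (x t) ((2 : ℝ) ^ j) with ⟨h, _⟩ | ⟨h, _⟩ <;>
    rcases min_cases (x t) ((2 : ℝ) ^ j + 2 ^ j) with ⟨h', _⟩ | ⟨h', _⟩ <;>
    linarith

lemma sum_smul_dyadicLayer_le {x : C(K, ℝ)} (hx : 0 ≤ x) (hp : 1 ≤ p) (J : ℕ) :
    ∑ j ∈ Finset.range J, ((2 : ℝ) ^ j) ^ (p - 1) • dyadicLayer x j ≤
      absPow p (zero_le_one.trans hp) x := by
  refine ContinuousMap.le_def.2 fun t => ?_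
  have hxt : 0 ≤ x t := hx t
  rw [ContinuousMap.sum_apply, absPow_apply, abs_of_nonneg hxt]
  simp only [ContinuousMap.smul_apply, smul_eq_mul, dyadicLayer_apply]
  calc ∑ j ∈ Finset.range J, ((2 : ℝ) ^ j) ^ (p - 1) * (min (x t) (2 ^ (j + 1)) - min (x t) (2 ^ j))
      ≤ ∑ j ∈ Finset.range J, x t ^ (p - 1) * (min (x t) (2 ^ (j + 1)) - min (x t) (2 ^ j)) :=
        Finset.sum_le_sum fun j _ => rpow_sub_one_mul_sub_min_le hp (by positivity)
          (pow_le_pow_right₀ one_le_two j.le_succ)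
    _ = x t ^ (p - 1) * (min (x t) (2 ^ J) - min (x t) (2 ^ 0)) := by
        rw [← Finset.mul_sum, Finset.sum_range_sub fun j => min (x t) (2 ^ j)]
    _ ≤ x t ^ (p - 1) * x t := by
        gcongr
        exact (sub_le_self _ (le_min hxt (by positivity))).trans (min_le_left _ _)
    _ = x t ^ p := rpow_sub_one_mul_self hp hxt

lemma smul_sub_truncation_le {x : C(K, ℝ)} (hx : 0 ≤ x) (hp : 1 ≤ p) {r : ℝ} (hr : 0 ≤ r) :
    r ^ (p - 1) • (x - truncation x r) ≤ absPow p (zero_le_one.trans hp) x := by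
  refine ContinuousMap.le_def.2 fun t => ?_
  have hxt : 0 ≤ x t := hx t
  have hmin : min (x t) (max r (x t)) = x t := min_eq_left (le_max_right _ _)
  rw [absPow_apply, abs_of_nonneg hxt, ← rpow_sub_one_mul_self hp hxt]
  calc r ^ (p - 1) * (x t - min (x t) r) ≤ x t ^ (p - 1) * (x t - min (x t) r) := by
        simpa only [hmin] using
          rpow_sub_one_mul_sub_min_le (y := x t) hp hr (le_max_left r (x t))
    _ ≤ x t ^ (p - 1) * x t := by
        gcongr
        exact sub_le_self _ (le_min hxt hr)

variable {Y : Type*} [NormedAddCommGroup Y] [NormedSpace ℝ Y] {T : C(K, ℝ) →L[ℝ] Y}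
  {L : C(K, ℝ) →ₚ[ℝ] ℝ} {E M R : ℝ} {x : C(K, ℝ)}

lemma norm_rpow_le_mul_rpow_sub_one_mul (h : ∀ f, 0 ≤ f → f ≤ 1 → ‖T f‖ ^ p ≤ E * L f)
    {r : ℝ} (hr : 0 < r) {f : C(K, ℝ)} (hf : 0 ≤ f) (hfr : ∀ t, f t ≤ r) :
    ‖T f‖ ^ p ≤ E * (r ^ (p - 1) * L f) := by
  have hscaled := h (r⁻¹ • f) (smul_nonneg (inv_nonneg.2 hr.le) hf)
    (ContinuousMap.le_def.2 fun t => inv_mul_le_one_of_le₀ (hfr t) hr.le)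
  rw [map_smul, map_smul, norm_smul, norm_inv, Real.norm_of_nonneg hr.le,
    Real.mul_rpow (inv_nonneg.2 hr.le) (norm_nonneg _), Real.inv_rpow hr.le,
    inv_mul_le_iff₀ (Real.rpow_pos_of_pos hr _)] at hscaled
  refine hscaled.trans_eq ?_
  rw [Real.rpow_sub_one hr.ne', smul_eq_mul]
  ring

lemma rpow_sum_norm_dyadicLayer_le (hp : 1 ≤ p) (hE : 0 ≤ E)
    (h : ∀ f, 0 ≤ f → f ≤ 1 → ‖T f‖ ^ p ≤ E * L f) (hx : 0 ≤ x) (J : ℕ) :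
    (∑ j ∈ Finset.range J, ‖T (dyadicLayer x j)‖) ^ p ≤
      (J : ℝ) ^ (p - 1) * (E * L (absPow p (zero_le_one.trans hp) x)) := by
  calc (∑ j ∈ Finset.range J, ‖T (dyadicLayer x j)‖) ^ p
      ≤ (J : ℝ) ^ (p - 1) * ∑ j ∈ Finset.range J, ‖T (dyadicLayer x j)‖ ^ p := by
        simpa only [Finset.card_range] using Real.rpow_sum_le_const_mul_sum_rpow_of_nonneg
          (Finset.range J) hp fun j _ => norm_nonneg (T (dyadicLayer x j))
    _ ≤ (J : ℝ) ^ (p - 1) *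
          (E * L (∑ j ∈ Finset.range J, ((2 : ℝ) ^ j) ^ (p - 1) • dyadicLayer x j)) := by
        refine mul_le_mul_of_nonneg_left ?_ (by positivity)
        rw [map_sum, Finset.mul_sum]
        refine Finset.sum_le_sum fun j _ => ?_
        rw [map_smul, smul_eq_mul]
        exact norm_rpow_le_mul_rpow_sub_one_mul h (by positivity) (dyadicLayer_nonneg x j)
          (dyadicLayer_apply_le x j)
    _ ≤ _ := by
        gcongr
        exact sum_smul_dyadicLayer_le hx hp J

lemma norm_map_sub_truncation_le (hp : 1 ≤ p) (hM : ∀ f, 0 ≤ f → ‖T f‖ ≤ M * L f) (hR : 0 ≤ R)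
    {r : ℝ} (hr : 0 ≤ r) (hMR : M ≤ R * r ^ (p - 1)) (hx : 0 ≤ x) :
    ‖T (x - truncation x r)‖ ≤ R * L (absPow p (zero_le_one.trans hp) x) := by
  have hnonneg : 0 ≤ x - truncation x r := sub_nonneg.2 inf_le_left
  calc ‖T (x - truncation x r)‖ ≤ M * L (x - truncation x r) := hM _ hnonneg
    _ ≤ R * r ^ (p - 1) * L (x - truncation x r) :=
        mul_le_mul_of_nonneg_right hMR (map_nonneg L hnonneg)
    _ = R * L (r ^ (p - 1) • (x - truncation x r)) := by rw [map_smul, smul_eq_mul, mul_assoc]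
    _ ≤ R * L (absPow p (zero_le_one.trans hp) x) := by
        gcongr
        exact smul_sub_truncation_le hx hp hr

/-- The bound for `‖T x‖ ^ p` obtained by cutting `x` at the heights `1` and `2 ^ J`. -/
def layerBound (p E R : ℝ) (J : ℕ) : ℝ :=
  3 ^ (p - 1) * (2 * E + (J : ℝ) ^ (p - 1) * E + R ^ p)

lemma norm_rpow_le_layerBound_of_nonneg (hp : 1 ≤ p) (hL_one : L 1 ≤ 2) (hE : 0 ≤ E)
    (h : ∀ f, 0 ≤ f → f ≤ 1 → ‖T f‖ ^ p ≤ E * L f) (hM : ∀ f, 0 ≤ f → ‖T f‖ ≤ M * L f)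
    (hR : 0 ≤ R) {J : ℕ} (hMR : M ≤ R * ((2 : ℝ) ^ J) ^ (p - 1)) (hx : 0 ≤ x)
    (hLx : L (absPow p (zero_le_one.trans hp) x) ≤ 1) : ‖T x‖ ^ p ≤ layerBound p E R J := by
  have hbase : ‖T (truncation x 1)‖ ^ p ≤ 2 * E := by
    have hle : truncation x 1 ≤ 1 := inf_le_right
    calc ‖T (truncation x 1)‖ ^ p ≤ E * L (truncation x 1) :=
          h _ (le_inf hx fun t => zero_le_one) hle
      _ ≤ E * 2 := by
          gcongr
          exact (OrderHomClass.mono L hle).trans hL_one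
      _ = 2 * E := mul_comm _ _
  have hlayers := (rpow_sum_norm_dyadicLayer_le hp hE h hx J).trans
    (mul_le_mul_of_nonneg_left (mul_le_of_le_one_right hE hLx) (by positivity))
  have htail : ‖T (x - truncation x (2 ^ J))‖ ^ p ≤ R ^ p := by
    gcongr
    exact (norm_map_sub_truncation_le hp hM hR (by positivity) hMR hx).trans
      (mul_le_of_le_one_right hR hLx)
  have htriangle : ‖T x‖ ≤ ‖T (truncation x 1)‖ + ∑ j ∈ Finset.range J, ‖T (dyadicLayer x j)‖ +
      ‖T (x - truncation x (2 ^ J))‖ := by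
    conv_lhs => rw [← truncation_add_sum_dyadicLayer_add x J, map_add, map_add, map_sum]
    exact norm_add₃_le.trans (by gcongr; exact norm_sum_le _ _)
  calc ‖T x‖ ^ p ≤ (‖T (truncation x 1)‖ + ∑ j ∈ Finset.range J, ‖T (dyadicLayer x j)‖ +
        ‖T (x - truncation x (2 ^ J))‖) ^ p := by gcongr
    _ ≤ 3 ^ (p - 1) * (‖T (truncation x 1)‖ ^ p +
          (∑ j ∈ Finset.range J, ‖T (dyadicLayer x j)‖) ^ p +
          ‖T (x - truncation x (2 ^ J))‖ ^ p) :=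
        add_add_rpow_le_mul_rpow hp (norm_nonneg _) (by positivity) (norm_nonneg _)
    _ ≤ layerBound p E R J := by
        rw [layerBound]
        gcongr

lemma norm_rpow_le_layerBound (hp : 1 ≤ p) (hL_one : L 1 ≤ 2) (hE : 0 ≤ E)
    (h : ∀ f, 0 ≤ f → f ≤ 1 → ‖T f‖ ^ p ≤ E * L f) (hM : ∀ f, 0 ≤ f → ‖T f‖ ≤ M * L f)
    (hR : 0 ≤ R) {J : ℕ} (hMR : M ≤ R * ((2 : ℝ) ^ J) ^ (p - 1))
    (hLx : L (absPow p (zero_le_one.trans hp) x) ≤ 1) :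
    ‖T x‖ ^ p ≤ 2 ^ p * layerBound p E R J := by
  have hpart : ∀ z : C(K, ℝ), 0 ≤ z → (∀ t, z t ≤ |x t|) → ‖T z‖ ^ p ≤ layerBound p E R J :=
    fun z hz hzx => norm_rpow_le_layerBound_of_nonneg hp hL_one hE h hM hR hMR hz <|
      (OrderHomClass.mono L <| ContinuousMap.le_def.2 fun t => Real.rpow_le_rpow (abs_nonneg _)
        ((abs_of_nonneg (hz t)).trans_le (hzx t)) (by positivity)).trans hLx
  have hpos := hpart x⁺ (posPart_nonneg x) fun t => max_le (le_abs_self _) (abs_nonneg _)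
  have hneg := hpart x⁻ (negPart_nonneg x) fun t => max_le (neg_le_abs _) (abs_nonneg _)
  calc ‖T x‖ ^ p ≤ (‖T x⁺‖ + ‖T x⁻‖) ^ p := by
        gcongr
        conv_lhs => rw [← posPart_sub_negPart x, map_sub]
        exact norm_sub_le _ _
    _ ≤ 2 ^ (p - 1) * (‖T x⁺‖ ^ p + ‖T x⁻‖ ^ p) :=
        add_rpow_le_mul_rpow hp (norm_nonneg _) (norm_nonneg _)
    _ ≤ 2 ^ (p - 1) * (layerBound p E R J + layerBound p E R J) := by gcongr
    _ = 2 ^ p * layerBound p E R J := by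
        rw [Real.rpow_sub_one two_ne_zero]
        ring

lemma norm_rpow_le_mul_of_norm_rpow_le (hp : 0 < p)
    (h : ∀ x, L (absPow p hp.le x) ≤ 1 → ‖T x‖ ^ p ≤ R) (x : C(K, ℝ)) :
    ‖T x‖ ^ p ≤ R * L (absPow p hp.le x) := by
  have hL0 : 0 ≤ L (absPow p hp.le x) :=
    map_nonneg L fun t => Real.rpow_nonneg (abs_nonneg (x t)) p
  refine le_mul_of_forall_lt₀ fun R' hR' r hr => ?_
  have hr0 : 0 < r := hL0.trans_lt hr
  have hpow : (r ^ (1 / p)) ^ p = r := by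
    rw [← Real.rpow_mul hr0.le, one_div_mul_cancel hp.ne', Real.rpow_one]
  have hσ : 0 < r ^ (1 / p) := by positivity
  have habsPow : absPow p hp.le ((r ^ (1 / p))⁻¹ • x) = r⁻¹ • absPow p hp.le x := by
    ext t
    simp only [absPow_apply, ContinuousMap.smul_apply, smul_eq_mul, abs_mul, abs_inv,
      abs_of_pos hσ, Real.mul_rpow (inv_nonneg.2 hσ.le) (abs_nonneg _), Real.inv_rpow hσ.le, hpow]
  have hscaled := h ((r ^ (1 / p))⁻¹ • x) (by
    rw [habsPow, map_smul, smul_eq_mul]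
    exact inv_mul_le_one_of_le₀ hr.le hr0.le)
  rw [map_smul, norm_smul, norm_inv, Real.norm_of_nonneg hσ.le,
    Real.mul_rpow (inv_nonneg.2 hσ.le) (norm_nonneg _), Real.inv_rpow hσ.le, hpow,
    inv_mul_le_iff₀ hr0, mul_comm] at hscaled
  exact hscaled.trans (mul_le_mul_of_nonneg_right hR'.le hr0.le)

end DyadicLayers

section LogarithmicBound

variable {p : ℝ}

/-- The constant in the bound of the `p`-summing norm by `(1 + log n) ^ (p - 1)`. -/
def summingConst (p : ℝ) : ℝ :=
  2 ^ (p + 1) * (3 ^ (p - 1) * (15 * p + 2 ^ p)) * (1 + 1 / ((p - 1) * Real.log 2)) ^ (p - 1)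

lemma summingConst_pos (hp : 1 < p) : 0 < summingConst p := by
  rw [summingConst]
  positivity

lemma exists_le_two_pow_rpow (hp : 1 < p) {n : ℕ} (hn : n ≠ 0) :
    ∃ J : ℕ, (n : ℝ) ≤ ((2 : ℝ) ^ J) ^ (p - 1) ∧
      (J : ℝ) ≤ (1 + 1 / ((p - 1) * Real.log 2)) * (1 + Real.log n) := by
  have hd : 0 < (p - 1) * Real.log 2 := mul_pos (sub_pos.2 hp) (Real.log_pos one_lt_two)
  refine ⟨⌈Real.log n / ((p - 1) * Real.log 2)⌉₊, ?_, ?_⟩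
  · rw [← Real.log_le_log_iff (by positivity) (by positivity), Real.log_rpow (by positivity),
      Real.log_pow, mul_left_comm]
    exact (div_le_iff₀ hd).1 (Nat.le_ceil _)
  · calc (⌈Real.log n / ((p - 1) * Real.log 2)⌉₊ : ℝ)
        ≤ Real.log n / ((p - 1) * Real.log 2) + 1 := (Nat.ceil_lt_add_one (by positivity)).le
      _ ≤ Real.log n / ((p - 1) * Real.log 2) + 1 + (Real.log n + 1 / ((p - 1) * Real.log 2)) :=
          le_add_of_nonneg_right (by positivity)
      _ = (1 + 1 / ((p - 1) * Real.log 2)) * (1 + Real.log n) := by ring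

lemma layerBound_le (hp : 1 ≤ p) {P A : ℝ} (hP : 0 ≤ P) (hA : 1 ≤ A) {J : ℕ} (hJ : J ≤ A) :
    layerBound p (p * (5 * P ^ p)) (2 * P) J ≤
      3 ^ (p - 1) * (15 * p + 2 ^ p) * A ^ (p - 1) * P ^ p := by
  have hp' : 0 ≤ p - 1 := sub_nonneg.2 hp
  have hA' : 1 ≤ A ^ (p - 1) := Real.one_le_rpow hA hp'
  calc layerBound p (p * (5 * P ^ p)) (2 * P) J
      = 3 ^ (p - 1) * (10 * p * 1 + 5 * p * (J : ℝ) ^ (p - 1) + 2 ^ p * 1) * P ^ p := by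
        rw [layerBound, Real.mul_rpow zero_le_two hP]
        ring
    _ ≤ 3 ^ (p - 1) * (10 * p * A ^ (p - 1) + 5 * p * A ^ (p - 1) + 2 ^ p * A ^ (p - 1)) *
          P ^ p := by gcongr
    _ = 3 ^ (p - 1) * (15 * p + 2 ^ p) * A ^ (p - 1) * P ^ p := by ring

variable {K : Type*} [TopologicalSpace K] [CompactSpace K] [Nonempty K]
  {Y : Type*} [NormedAddCommGroup Y] [NormedSpace ℝ Y] {T : C(K, ℝ) →L[ℝ] Y} {n : ℕ} {P : ℝ}

lemma exists_pietsch_functional_one {M : ℝ} (h : ∀ m, HasSummingBound 1 1 m M T) :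
    ∃ L : C(K, ℝ) →ₚ[ℝ] ℝ, L 1 = 1 ∧ ∀ f, 0 ≤ f → ‖T f‖ ≤ M * L f := by
  obtain ⟨L, hL_one, hL⟩ := exists_pietsch_functional one_pos h
  refine ⟨L, hL_one, fun f hf => ?_⟩
  have habs : absPow 1 zero_le_one f = f := by
    ext t
    rw [absPow_apply, Real.rpow_one]
    exact abs_of_nonneg (hf t)
  simpa only [Real.rpow_one, habs] using hL f

lemma hasSummingBound_log (hp : 1 < p) (hn : n ≠ 0) (hP : 0 ≤ P)
    (hone : ∀ m, HasSummingBound 1 1 m (2 * n * P) T)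
    (hpone : ∀ m, HasSummingBound p 1 m (5 * P ^ p) T) (m : ℕ) :
    HasSummingBound p p m (summingConst p * (1 + Real.log n) ^ (p - 1) * P ^ p) T := by
  have hp0 : 0 < p := one_pos.trans hp
  obtain ⟨L₁, hL₁_one, hL₁⟩ := exists_pisier_functional hp hpone
  obtain ⟨L₂, hL₂_one, hL₂⟩ := exists_pietsch_functional_one hone
  obtain ⟨J, hnJ, hJ⟩ := exists_le_two_pow_rpow hp hn
  set κ := 1 + 1 / ((p - 1) * Real.log 2) with hκ
  have hL_one : (L₁ + L₂) 1 = 2 := by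
    rw [PositiveLinearMap.add_apply, hL₁_one, hL₂_one, one_add_one_eq_two]
  have hκ_one : 1 ≤ κ := le_add_of_nonneg_right <|
    one_div_nonneg.2 (mul_nonneg (sub_nonneg.2 hp.le) (Real.log_nonneg one_le_two))
  have hlog_one : 1 ≤ 1 + Real.log n := le_add_of_nonneg_right (Real.log_natCast_nonneg n)
  have hunit : ∀ x, (L₁ + L₂) (absPow p hp0.le x) ≤ 1 →
      ‖T x‖ ^ p ≤ 2 ^ p * layerBound p (p * (5 * P ^ p)) (2 * P) J := fun x hx => by
    refine norm_rpow_le_layerBound hp.le hL_one.le (by positivity) (fun f hf hf1 => ?_)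
      (M := 2 * n * P) (fun f hf => ?_) (by positivity) ?_ hx
    · refine (hL₁ f hf hf1).trans ?_
      gcongr
      exact le_add_of_nonneg_right (map_nonneg L₂ hf)
    · refine (hL₂ f hf).trans ?_
      gcongr
      exact le_add_of_nonneg_left (map_nonneg L₁ hf)
    · rw [mul_right_comm]
      gcongr
  have hbound := layerBound_le hp.le hP (one_le_mul_of_one_le_of_one_le hκ_one hlog_one) hJ
  refine fun x hx => (hasSummingBound_of_le_functional hp0.le (by rw [layerBound]; positivity)
    (norm_rpow_le_mul_of_norm_rpow_le hp0 hunit) m x hx).trans ?_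
  rw [hL_one]
  calc 2 ^ p * layerBound p (p * (5 * P ^ p)) (2 * P) J * 2
      ≤ 2 ^ p *
          (3 ^ (p - 1) * (15 * p + 2 ^ p) * (κ * (1 + Real.log n)) ^ (p - 1) * P ^ p) * 2 := by
        gcongr
    _ = summingConst p * (1 + Real.log n) ^ (p - 1) * P ^ p := by
        rw [Real.mul_rpow (by positivity) (by positivity), summingConst, ← hκ,
          Real.rpow_add_one two_ne_zero]
        ring

end LogarithmicBound

section RankBounds

lemma sqrt_le_two_mul_floor_rpow {p' : ℝ} (hp' : 1 ≤ p') (n : ℕ) :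
    √n ≤ 2 * (⌊(n : ℝ) ^ (p' / 2)⌋₊ : ℝ) ^ (1 / p') := by
  rcases Nat.eq_zero_or_pos n with rfl | hn
  · rw [Nat.cast_zero, Real.sqrt_zero]
    positivity
  have hp'0 : 0 < p' := by linarith
  have hone : (1 : ℝ) ≤ (n : ℝ) ^ (p' / 2) := Real.one_le_rpow (mod_cast hn) (by positivity)
  have hfloor : (n : ℝ) ^ (p' / 2) ≤ 2 * ⌊(n : ℝ) ^ (p' / 2)⌋₊ := by
    have hlt := Nat.lt_floor_add_one ((n : ℝ) ^ (p' / 2))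
    have hpos : (1 : ℝ) ≤ ⌊(n : ℝ) ^ (p' / 2)⌋₊ := mod_cast (Nat.one_le_floor_iff _).2 hone
    linarith
  calc √n = ((n : ℝ) ^ (p' / 2)) ^ (1 / p') := by
        rw [← Real.rpow_mul n.cast_nonneg, Real.sqrt_eq_rpow]
        congr 1
        field_simp
    _ ≤ (2 * ⌊(n : ℝ) ^ (p' / 2)⌋₊) ^ (1 / p') := by gcongr
    _ = 2 ^ (1 / p') * (⌊(n : ℝ) ^ (p' / 2)⌋₊ : ℝ) ^ (1 / p') :=
        Real.mul_rpow zero_le_two (Nat.cast_nonneg _)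
    _ ≤ 2 * (⌊(n : ℝ) ^ (p' / 2)⌋₊ : ℝ) ^ (1 / p') := by
        gcongr
        exact Real.rpow_le_self_of_one_le one_le_two ((div_le_one hp'0).2 hp')

lemma le_floor_rpow {r : ℝ} (hr : 1 ≤ r) (n : ℕ) : n ≤ ⌊(n : ℝ) ^ r⌋₊ := by
  rcases Nat.eq_zero_or_pos n with rfl | hn
  · exact Nat.zero_le _
  · exact Nat.le_floor (Real.self_le_rpow_of_one_le (mod_cast hn) hr)

variable {K : Type*} [TopologicalSpace K] [CompactSpace K] [Nonempty K]
  {Y : Type*} [NormedAddCommGroup Y] [NormedSpace ℝ Y] {T : C(K, ℝ) →L[ℝ] Y} {p p' P : ℝ} {n : ℕ}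

lemma hasSummingBound_of_two_le (hp : 2 ≤ p) (hT : RankLE T n) (hn : n ≠ 0) (hP : 0 ≤ P)
    (h : HasSummingBound p p n (P ^ p) T) (N : ℕ) :
    HasSummingBound p p N (summingConst p * (1 + Real.log n) ^ (p - 1) * P ^ p) T := by
  have hn_one : (1 : ℝ) ≤ n := mod_cast Nat.one_le_iff_ne_zero.2 hn
  have htwo : ∀ N, HasSummingBound 2 2 N (4 * ((n : ℝ) ^ (1 - 2 / p) * P ^ (2 : ℝ))) T :=
    hasSummingBound_two_of_rankLE hT (h.exponent_down hP two_pos hp)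
  refine hasSummingBound_log (one_lt_two.trans_le hp) hn hP (fun N => ?_) (fun N => ?_) N
  · refine (hasSummingBound_one_of_two hT (by positivity) htwo N).mono
      (Real.sqrt_le_iff.2 ⟨by positivity, ?_⟩)
    calc (n : ℝ) * (4 * ((n : ℝ) ^ (1 - 2 / p) * P ^ (2 : ℝ)))
        ≤ n * (4 * ((n : ℝ) ^ (1 : ℝ) * P ^ (2 : ℝ))) := by
          gcongr
          exact sub_le_self _ (by positivity)
      _ = (2 * n * P) ^ 2 := by
          rw [Real.rpow_one, Real.rpow_two]
          ring
  · exact ((h.interpolate hP hn two_pos hp (htwo N)).weak_exponent_down one_pos one_le_two).mono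
      (by norm_num)

lemma hasSummingBound_of_le_two (hp : p ≤ 2) (hconj : p.HolderConjugate p') (hT : RankLE T n)
    (hn : n ≠ 0) (hP : 0 ≤ P) (h : HasSummingBound p p ⌊(n : ℝ) ^ (p' / 2)⌋₊ (P ^ p) T) (N : ℕ) :
    HasSummingBound p p N (summingConst p * (1 + Real.log n) ^ (p - 1) * P ^ p) T := by
  have hp0 : 0 < p := hconj.pos
  have hn_one : (1 : ℝ) ≤ n := mod_cast Nat.one_le_iff_ne_zero.2 hn
  have hp'2 : 2 ≤ p' := by
    rw [hconj.conjugate_eq, le_div_iff₀ hconj.sub_one_pos]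
    linarith
  have hnm : n ≤ ⌊(n : ℝ) ^ (p' / 2)⌋₊ := le_floor_rpow (by linarith) n
  have htwo : ∀ N, HasSummingBound 2 2 N (4 * P ^ (2 : ℝ)) T := hasSummingBound_two_of_rankLE hT
    ((h.mono_card hp0.ne' hp0.ne' hnm).exponent_up hP hp0 hp)
  have hone : ∀ N, HasSummingBound 1 1 N (√n * (2 * P)) T := fun N =>
    (hasSummingBound_one_of_two hT (by positivity) htwo N).mono <| by
      rw [Real.sqrt_mul n.cast_nonneg, Real.rpow_two, show 4 * P ^ 2 = (2 * P) ^ 2 by ring,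
        Real.sqrt_sq (by positivity)]
  refine hasSummingBound_log hconj.lt hn hP (fun N => (hone N).mono ?_) (fun N => ?_) N
  · calc √n * (2 * P) ≤ n * (2 * P) := by
          gcongr
          exact Real.sqrt_le_self_iff.2 (.inr hn_one)
      _ = 2 * n * P := by ring
  · have hmixed := h.interpolate (C := 4) hP (by omega) one_pos hconj.lt.le <| (hone N).mono <| by
      rw [Real.rpow_one, one_div, hconj.one_sub_inv, ← one_div]
      calc √n * (2 * P) ≤ 2 * (⌊(n : ℝ) ^ (p' / 2)⌋₊ : ℝ) ^ (1 / p') * (2 * P) := by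
            gcongr
            exact sqrt_le_two_mul_floor_rpow hconj.symm.lt.le n
        _ = 4 * ((⌊(n : ℝ) ^ (p' / 2)⌋₊ : ℝ) ^ (1 / p') * P) := by ring
    exact hmixed.mono (by norm_num)

end RankBounds

section SummingNorms

lemma eSum_ofReal_le_ofReal_iff {ι : Type*} [Fintype ι] {p c : ℝ} (hp : 0 < p) {a : ι → ℝ}
    (ha : ∀ k, 0 ≤ a k) (hc : 0 ≤ c) :
    eSum (ENNReal.ofReal p) (fun k => ENNReal.ofReal (a k)) ≤ ENNReal.ofReal c ↔
      ∑ k, a k ^ p ≤ c ^ p := by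
  have hpow : ∀ k ∈ Finset.univ, 0 ≤ a k ^ p := fun k _ => Real.rpow_nonneg (ha k) p
  rw [eSum, if_neg ENNReal.ofReal_ne_top, ENNReal.toReal_ofReal hp.le, one_div,
    ENNReal.rpow_inv_le_iff hp, ENNReal.ofReal_rpow_of_nonneg hc hp.le]
  simp only [ENNReal.ofReal_rpow_of_nonneg (ha _) hp.le]
  rw [← ENNReal.ofReal_sum_of_nonneg hpow,
    ENNReal.ofReal_le_ofReal_iff (Real.rpow_nonneg hc p)]

lemma piPQ_zero {X Y : Type*} [NormedAddCommGroup X] [NormedSpace ℝ X] [NormedAddCommGroup Y]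
    [NormedSpace ℝ Y] {p : ℝ} (hp : 0 < p) (q : ℝ≥0∞) :
    piPQ (ENNReal.ofReal p) q (0 : X →L[ℝ] Y) = 0 := by
  refine le_zero_iff.1 (iSup_le fun N => iSup_le fun x => ?_)
  rw [← ENNReal.ofReal_zero, eSum_ofReal_le_ofReal_iff hp (fun k => norm_nonneg _) le_rfl]
  simp [hp.ne']

lemma RankLE.eq_zero {X Y : Type*} [NormedAddCommGroup X] [NormedSpace ℝ X]
    [NormedAddCommGroup Y] [NormedSpace ℝ Y] {T : X →L[ℝ] Y} (hT : RankLE T 0) : T = 0 := by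
  have := hT.1
  have hrange := Submodule.finrank_eq_zero.1 (Nat.le_zero.1 hT.2)
  exact ContinuousLinearMap.coe_injective (LinearMap.range_eq_bot.1 hrange)

variable {K : Type*} [TopologicalSpace K] [CompactSpace K] {Y : Type*} [NormedAddCommGroup Y]
  [NormedSpace ℝ Y] {T : C(K, ℝ) →L[ℝ] Y} {p p' : ℝ} {m n N : ℕ}

lemma mul_norm_sum_sign_mul_rpow_smul_le {ι : Type*} [Fintype ι] (hp : 1 < p) {x : ι → C(K, ℝ)}
    (hx : ∀ t, ∑ k, |x k t| ^ p ≤ 1) (b : ι → ℝ) :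
    p * ‖∑ k, (SignType.sign (b k) * |b k| ^ (p - 1)) • x k‖ ≤ (p - 1) * ∑ k, |b k| ^ p + 1 := by
  have hp0 : 0 < p := one_pos.trans hp
  rw [← le_div_iff₀' hp0, ContinuousMap.norm_le _ (by positivity)]
  intro t
  have habs : ∀ k, |(SignType.sign (b k) : ℝ)| ≤ 1 := fun k => by
    rcases lt_trichotomy (b k) 0 with h | h | h <;> simp [h]
  have hterm : ∀ k, ‖((SignType.sign (b k) * |b k| ^ (p - 1)) • x k) t‖ ≤
      |b k| ^ (p - 1) * |x k t| := fun k => by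
    rw [ContinuousMap.smul_apply, smul_eq_mul, Real.norm_eq_abs, abs_mul, abs_mul,
      abs_of_nonneg (Real.rpow_nonneg (abs_nonneg (b k)) _)]
    gcongr
    exact mul_le_of_le_one_left (by positivity) (habs k)
  rw [le_div_iff₀' hp0, ContinuousMap.sum_apply]
  calc p * ‖∑ k, ((SignType.sign (b k) * |b k| ^ (p - 1)) • x k) t‖
      ≤ p * ∑ k, |b k| ^ (p - 1) * |x k t| := by
        gcongr
        exact (norm_sum_le _ _).trans (Finset.sum_le_sum fun k _ => hterm k)
    _ ≤ ∑ k, ((p - 1) * |b k| ^ p + |x k t| ^ p) := by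
        rw [Finset.mul_sum]
        exact Finset.sum_le_sum fun k _ =>
          mul_rpow_sub_one_mul_le hp (abs_nonneg _) (abs_nonneg _)
    _ ≤ (p - 1) * ∑ k, |b k| ^ p + 1 := by
        rw [Finset.sum_add_distrib, ← Finset.mul_sum]
        gcongr
        exact hx t

lemma sum_abs_functional_rpow_le_one {ι : Type*} [Fintype ι] (hp : 1 < p) {x : ι → C(K, ℝ)}
    (hx : ∀ t, ∑ k, |x k t| ^ p ≤ 1) {f : C(K, ℝ) →L[ℝ] ℝ} (hf : ‖f‖ ≤ 1) :
    ∑ k, |f (x k)| ^ p ≤ 1 := by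
  set g := ∑ k, (SignType.sign (f (x k)) * |f (x k)| ^ (p - 1)) • x k with hg
  have hfg : f g = ∑ k, |f (x k)| ^ p := by
    simp only [hg, map_sum, map_smul, smul_eq_mul]
    refine Finset.sum_congr rfl fun k _ => ?_
    rw [mul_right_comm, sign_mul_self, mul_comm, rpow_sub_one_mul_self hp.le (abs_nonneg _)]
  have hle : f g ≤ ‖g‖ :=
    (le_abs_self _).trans ((f.le_opNorm g).trans (mul_le_of_le_one_left (norm_nonneg g) hf))
  rw [hfg] at hle
  have := mul_norm_sum_sign_mul_rpow_smul_le hp hx fun k => f (x k)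
  nlinarith

lemma weakLq_le_one_iff (hp : 1 < p) (x : Fin N → C(K, ℝ)) :
    weakLq (ENNReal.ofReal p) x ≤ 1 ↔ ∀ t, ∑ k, |x k t| ^ p ≤ 1 := by
  have hdual : weakLq (ENNReal.ofReal p) x ≤ 1 ↔
      ∀ f : C(K, ℝ) →L[ℝ] ℝ, ‖f‖ ≤ 1 → ∑ k, |f (x k)| ^ p ≤ 1 := by
    rw [weakLq, iSup_le_iff, Subtype.forall, ← ENNReal.ofReal_one]
    simp only [eSum_ofReal_le_ofReal_iff (one_pos.trans hp) (fun _ => abs_nonneg _) zero_le_one,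
      Real.one_rpow]
  rw [hdual]
  refine ⟨fun h t => ?_, fun h f hf => sum_abs_functional_rpow_le_one hp h hf⟩
  refine h (ContinuousMap.evalCLM ℝ t)
    (ContinuousLinearMap.opNorm_le_bound _ zero_le_one fun g => ?_)
  rw [one_mul]
  exact g.norm_coe_le_norm t

lemma piN_le_ofReal_iff (hp : 1 < p) {P : ℝ} (hP : 0 ≤ P) :
    piN (ENNReal.ofReal p) (ENNReal.ofReal p) m T ≤ ENNReal.ofReal P ↔
      HasSummingBound p p m (P ^ p) T := by
  rw [piN, iSup_le_iff, Subtype.forall]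
  simp only [eSum_ofReal_le_ofReal_iff (one_pos.trans hp) (fun _ => norm_nonneg _) hP,
    weakLq_le_one_iff hp, HasSummingBound]

lemma piPQ_le_ofReal_mul_piN (hp : 1 < p) {a : ℝ} (ha : 0 < a)
    (h : ∀ P, 0 ≤ P → HasSummingBound p p m (P ^ p) T →
      ∀ N, HasSummingBound p p N ((a * P) ^ p) T) :
    piPQ (ENNReal.ofReal p) (ENNReal.ofReal p) T ≤
      ENNReal.ofReal a * piN (ENNReal.ofReal p) (ENNReal.ofReal p) m T := by
  rcases eq_or_ne (piN (ENNReal.ofReal p) (ENNReal.ofReal p) m T) ⊤ with htop | hfin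
  · simp [htop, ENNReal.mul_top, ha]
  obtain ⟨P, hP, hpi⟩ : ∃ P, 0 ≤ P ∧
      piN (ENNReal.ofReal p) (ENNReal.ofReal p) m T = ENNReal.ofReal P :=
    ⟨_, ENNReal.toReal_nonneg, (ENNReal.ofReal_toReal hfin).symm⟩
  rw [hpi, ← ENNReal.ofReal_mul ha.le]
  exact iSup_le fun N => (piN_le_ofReal_iff hp (by positivity)).2
    (h P hP ((piN_le_ofReal_iff hp hP).1 hpi.le) N)

lemma piPQ_le_log_mul_piN (hconj : p.HolderConjugate p') (hT : RankLE T n)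
    (h : ∀ P, 0 ≤ P → Nonempty K → n ≠ 0 → HasSummingBound p p m (P ^ p) T →
      ∀ N, HasSummingBound p p N (summingConst p * (1 + Real.log n) ^ (p - 1) * P ^ p) T) :
    piPQ (ENNReal.ofReal p) (ENNReal.ofReal p) T ≤
      ENNReal.ofReal (summingConst p ^ (1 / p) * (1 + Real.log n) ^ (1 / p')) *
        piN (ENNReal.ofReal p) (ENNReal.ofReal p) m T := by
  have hp0 : 0 < p := hconj.pos
  rcases eq_or_ne n 0 with rfl | hn
  · simp [hT.eq_zero, piPQ_zero hp0]
  rcases isEmpty_or_nonempty K with hK | hK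
  · simp [Subsingleton.elim T 0, piPQ_zero hp0]
  have hlog : 0 < 1 + Real.log n := by linarith [Real.log_natCast_nonneg n]
  have hconst : 0 < summingConst p := summingConst_pos hconj.lt
  refine piPQ_le_ofReal_mul_piN hconj.lt (by positivity) fun P hP hm N =>
    (h P hP hK hn hm N).mono (le_of_eq ?_)
  rw [Real.mul_rpow (by positivity) hP, Real.mul_rpow (by positivity) (by positivity),
    ← Real.rpow_mul hconst.le, ← Real.rpow_mul hlog.le, one_div_mul_cancel hp0.ne', Real.rpow_one,
    one_div_mul_eq_div, hconj.div_conj_eq_sub_one]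

end SummingNorms

theorem statement14_general (p p' : ℝ) (hp1 : 1 < p) (hconj : 1 / p + 1 / p' = 1) :
    ∃ c : ℝ, 0 < c ∧
      ∀ (K : Type*) [TopologicalSpace K] [CompactSpace K]
        (Y : Type*) [NormedAddCommGroup Y] [NormedSpace ℝ Y]
        (n : ℕ) (T : C(K, ℝ) →L[ℝ] Y), RankLE T n →
        (2 ≤ p →
          piPQ (ENNReal.ofReal p) (ENNReal.ofReal p) T ≤
            ENNReal.ofReal (c * (1 + Real.log n) ^ (1 / p')) *
              piN (ENNReal.ofReal p) (ENNReal.ofReal p) n T) ∧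
        (p ≤ 2 →
          piPQ (ENNReal.ofReal p) (ENNReal.ofReal p) T ≤
            ENNReal.ofReal (c * (1 + Real.log n) ^ (1 / p')) *
              piN (ENNReal.ofReal p) (ENNReal.ofReal p) ⌊(n : ℝ) ^ (p' / 2)⌋₊ T) := by
  have hpp' : p.HolderConjugate p' := by
    rw [Real.holderConjugate_iff, ← one_div, ← one_div]
    exact ⟨hp1, hconj⟩
  refine ⟨summingConst p ^ (1 / p), Real.rpow_pos_of_pos (summingConst_pos hp1) _, ?_⟩
  exact fun K _ _ Y _ _ n T hT =>
    ⟨fun hp => piPQ_le_log_mul_piN hpp' hT fun _ hP _ hn hm =>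
      hasSummingBound_of_two_le hp hT hn hP hm,
    fun hp => piPQ_le_log_mul_piN hpp' hT fun _ hP _ hn hm =>
      hasSummingBound_of_le_two hp hpp' hT hn hP hm⟩

/-- for `1 < p < ∞`, `p ≠ 2`, with conjugate exponent `p'`, there
is a constant `c_p` such that for every operator `T : C(K) → Y` of rank at most
`n` (`K` compact Hausdorff): if `2 < p` then
`π_p(T) ≤ c_p (1 + ln n)^{1/p'} π_p^n(T)`, and if `p < 2` then
`π_p(T) ≤ c_p (1 + ln n)^{1/p'} π_p^{⌊n^{p'/2}⌋}(T)`. -/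
theorem statement14 (p p' : ℝ) (hp1 : 1 < p) (hp2 : p ≠ 2) (hconj : 1 / p + 1 / p' = 1) :
    ∃ c : ℝ, 0 < c ∧
      ∀ (K : Type*) [TopologicalSpace K] [CompactSpace K] [T2Space K]
        (Y : Type*) [NormedAddCommGroup Y] [NormedSpace ℝ Y] [CompleteSpace Y]
        (n : ℕ) (T : C(K, ℝ) →L[ℝ] Y), RankLE T n →
        (2 < p →
          piPQ (ENNReal.ofReal p) (ENNReal.ofReal p) T ≤
            ENNReal.ofReal (c * (1 + Real.log n) ^ (1 / p')) *
              piN (ENNReal.ofReal p) (ENNReal.ofReal p) n T) ∧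
        (p < 2 →
          piPQ (ENNReal.ofReal p) (ENNReal.ofReal p) T ≤
            ENNReal.ofReal (c * (1 + Real.log n) ^ (1 / p')) *
              piN (ENNReal.ofReal p) (ENNReal.ofReal p) (⌊(n : ℝ) ^ (p' / 2)⌋₊) T) := by
  obtain ⟨c, hc, hbound⟩ := statement14_general p p' hp1 hconj
  exact ⟨c, hc, fun K _ _ _ Y _ _ _ n T hT => (hbound K Y n T hT).imp (· ∘ le_of_lt) (· ∘ le_of_lt)⟩

end
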